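/- There exist constants η > 0 and C > 0 such that for every n and every prime p with 2 < p ≤ exp(η·n^{1/4}): |E[#{λ ∈ F_p : det_{F_p}(M_n − λ·I_n) = 0}] − 1| ≤ C/p. That is, the expected number of roots in F_p (counted without multiplicity) of the characteristic polynomial of M_n reduced mod p equals 1 + O(1/p). -/

import Mathlib

open Finset

noncomputable section

/-- The sign `±1` associated to a Boolean. -/
def signb (R : Type*) [Ring R] (b : Bool) : R := if b then 1 else -1

open Classical in
/-- Uniform/counting probability of an event on a finite sample space. -/
def prob {Ω : Type*} [Fintype Ω] (E : Ω → Prop) : ℝ :=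
  ((Finset.univ.filter E).card : ℝ) / (Fintype.card Ω : ℝ)

/-- The symmetric random sign matrix determined by the Boolean data `ω`
(only the entries `ω i j` with `i ≤ j` are used); it is uniformly distributed
over symmetric `±1` matrices when `ω` is uniform. -/
def symMat (R : Type*) [Ring R] {n : ℕ} (ω : Fin n → Fin n → Bool) :
    Matrix (Fin n) (Fin n) R :=
  Matrix.of fun i j => signb R (ω (min i j) (max i j))

/-- Atom probability of a vector over `ZMod p` w.r.t. i.i.d. Rademacher signs. -/
def rho (p : ℕ) {ι : Type*} [Fintype ι] [DecidableEq ι] (w : ι → ZMod p) : ℝ :=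
  ⨆ r : ZMod p, prob (fun ξ : ι → Bool => ∑ i, signb (ZMod p) (ξ i) * w i = r)

/-- Discrepancy of a vector over `ZMod p` w.r.t. i.i.d. Rademacher signs. -/
def disc (p : ℕ) {ι : Type*} [Fintype ι] [DecidableEq ι] (w : ι → ZMod p) : ℝ :=
  ⨆ x : ZMod p,
    |prob (fun ξ : ι → Bool => ∑ i, signb (ZMod p) (ξ i) * w i = x) - 1 / (p : ℝ)|

/-!
The expected number of roots is `∑ λ, P(det (M_n - λ) = 0)`, so it suffices that each of these `p`
probabilities is `1 / p + O(1 / p ^ 2)`. Build the matrix by successive borderings. If `N` is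
invertible, then the bordering of `N` by the corner entry `a` and the sign vector `y` is singular
exactly when `y ⬝ᵥ N⁻¹ *ᵥ y = a`; if `N` is singular, then the corank drops unless `y` is orthogonal
to the kernel of `N`. When `N` is good, in the sense that no vector mapped by `N` to a difference of
two sign vectors on a fixed small set `Z` of coordinates (in particular no kernel vector) has a
large atom or Fourier coefficient, the first event has probability `1 / p + O(1 / p ^ 2)` by
decoupling the quadratic form, and the second one has probability at most `2 / p`. The corank thus
performs a walk with a strong drift towards `0`.

That `N` is good with overwhelming probability follows from a union bound over the structured
vectors, those having a large character sum. Halász's argument bounds the atoms of a vector by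
the sizes of the level sets of `t ↦ ∑ i, ‖t w i / p‖ ^ 2`, which grow linearly by Cauchy–Davenport.
Such vectors have most coordinates in a Bohr set of small cardinality, determined by a few random
frequencies from the level set, so there are few of them.
-/

open scoped BigOperators

section Probability

variable {Ω ι κ : Type*} [Fintype Ω]

theorem prob_eq_expect (E : Ω → Prop) [DecidablePred E] :
    prob E = 𝔼 ω, if E ω then (1 : ℝ) else 0 := by
  rw [prob, Fintype.expect_eq_sum_div_card, sum_boole]
  congr

theorem prob_nonneg (E : Ω → Prop) : 0 ≤ prob E := by
  unfold prob
  positivity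

theorem prob_le_one (E : Ω → Prop) : prob E ≤ 1 :=
  div_le_one_of_le₀ (mod_cast card_le_univ _) (Nat.cast_nonneg _)

theorem prob_mono {E F : Ω → Prop} (h : ∀ ω, E ω → F ω) : prob E ≤ prob F := by
  classical
  unfold prob
  gcongr with ω _
  exact h ω

theorem prob_congr {E F : Ω → Prop} (h : ∀ ω, E ω ↔ F ω) : prob E = prob F :=
  le_antisymm (prob_mono fun ω ↦ (h ω).1) (prob_mono fun ω ↦ (h ω).2)

theorem prob_exists_le (s : Finset ι) (E : ι → Ω → Prop) :
    prob (fun ω ↦ ∃ i ∈ s, E i ω) ≤ ∑ i ∈ s, prob (E i) := by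
  classical
  simp only [prob, ← sum_div]
  gcongr
  refine mod_cast (card_le_card fun ω hω ↦ ?_).trans (card_biUnion_le (s := s))
  simpa using hω

theorem expect_pi_prod {K : Type*} [Fintype ι] [DecidableEq ι] [Fintype κ] [Semifield K]
    [CharZero K] (f : ι → κ → K) : 𝔼 x : ι → κ, ∏ i, f i (x i) = ∏ i, 𝔼 b, f i b := by
  simp only [Fintype.expect_eq_sum_div_card, prod_div_distrib, Fintype.card_fun, prod_univ_sum,
    prod_const, card_univ, Nat.cast_pow, Fintype.piFinset_univ]

theorem prob_forall [Fintype ι] [DecidableEq ι] [Fintype κ] (E : ι → κ → Prop) :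
    prob (fun x : ι → κ ↦ ∀ i, E i (x i)) = ∏ i, prob (E i) := by
  classical
  simp only [prob_eq_expect, ← expect_pi_prod, prod_boole, mem_univ, true_imp_iff]

theorem prob_forall_mem_le [Fintype ι] [DecidableEq ι] [Fintype κ] {S : Finset ι}
    {E : ι → κ → Prop} {ρ : ℝ} (hE : ∀ i ∈ S, prob (E i) ≤ ρ) :
    prob (fun x : ι → κ ↦ ∀ i ∈ S, E i (x i)) ≤ ρ ^ #S := by
  rw [prob_forall fun i b ↦ i ∈ S → E i b, ← prod_const, ← univ_inter S, ← prod_ite_mem,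
    univ_inter]
  refine prod_le_prod (fun i _ ↦ prob_nonneg _) fun i _ ↦ ?_
  split_ifs with hi
  · exact (prob_mono fun b hb ↦ hb hi).trans (hE i hi)
  · exact prob_le_one _

theorem expect_expect_perm_fst {M : Type*} [AddCommMonoid M] [Module ℚ≥0 M]
    (e : Equiv.Perm (Ω × Ω)) (f : Ω → M) :
    𝔼 ω, 𝔼 ζ, f (e (ω, ζ)).1 = 𝔼 ω, f ω := by
  rcases isEmpty_or_nonempty Ω
  · simp
  calc 𝔼 ω, 𝔼 ζ, f (e (ω, ζ)).1 = 𝔼 q : Ω × Ω, f (e q).1 :=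
        (expect_product' univ univ fun ω ζ ↦ f (e (ω, ζ)).1).symm
    _ = 𝔼 q : Ω × Ω, f q.1 := Fintype.expect_equiv e _ _ fun _ ↦ rfl
    _ = 𝔼 ω, f ω := by
        rw [← univ_product_univ, expect_product]
        simp

theorem prob_le_of_forall_prob_perm_fst_le [Nonempty Ω] (e : Equiv.Perm (Ω × Ω)) {E : Ω → Prop}
    {ρ : ℝ} (h : ∀ ω, prob (fun ζ ↦ E (e (ω, ζ)).1) ≤ ρ) : prob E ≤ ρ := by
  classical
  rw [prob_eq_expect, ← expect_expect_perm_fst e]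
  exact expect_le univ_nonempty fun ω _ ↦ (prob_eq_expect _).symm.trans_le (h ω)

end Probability

section Characters

open ZMod (stdAddChar)

variable {N : ℕ} [NeZero N] {Ω ι : Type*}

theorem stdAddChar_neg_eq_conj (a : ZMod N) : stdAddChar (-a) = (starRingEnd ℂ) (stdAddChar a) :=
  AddChar.map_neg_eq_conj _ _

theorem stdAddChar_sum (s : Finset ι) (f : ι → ZMod N) :
    stdAddChar (∑ i ∈ s, f i) = ∏ i ∈ s, stdAddChar (f i) := by
  classical
  induction s using Finset.induction_on with
  | empty => simp
  | insert a s ha ih => rw [sum_insert ha, prod_insert ha, AddChar.map_add_eq_mul, ih]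

theorem sum_stdAddChar_mul (b : ZMod N) :
    ∑ t : ZMod N, stdAddChar (t * b) = if b = 0 then (N : ℂ) else 0 := by
  rw [AddChar.sum_mulShift b (ZMod.isPrimitive_stdAddChar N), ZMod.card, Nat.cast_ite,
    Nat.cast_zero]

/-- `|cos (2πa/N)|`: the modulus of the characteristic function of a random sign times `a`. -/
def absCos (a : ZMod N) : ℝ := ‖(stdAddChar a + stdAddChar (-a)) / 2‖

/-- The chord `|1 - e(2a/N)| = 2 |sin (2πa/N)|`. Unlike `1 - absCos`, it is subadditive. -/
def sinChord (a : ZMod N) : ℝ := ‖1 - stdAddChar (2 * a)‖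

theorem absCos_nonneg (a : ZMod N) : 0 ≤ absCos a := norm_nonneg _

theorem sinChord_nonneg (a : ZMod N) : 0 ≤ sinChord a := norm_nonneg _

theorem absCos_sq (a : ZMod N) : absCos a ^ 2 = 1 - sinChord a ^ 2 / 4 := by
  unfold absCos sinChord
  rw [two_mul, AddChar.map_add_eq_mul, stdAddChar_neg_eq_conj]
  have hunit : ‖stdAddChar a‖ = 1 := AddChar.norm_apply _ a
  generalize stdAddChar a = z at hunit ⊢
  have hz : z.re ^ 2 = 1 - z.im ^ 2 := by
    have := Complex.sq_norm z
    rw [hunit, Complex.normSq_apply] at this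
    linarith
  have hre : (z + (starRingEnd ℂ) z) / 2 = (z.re : ℂ) := by
    rw [Complex.add_conj]
    push_cast
    ring
  rw [hre, Complex.sq_norm, Complex.sq_norm, Complex.normSq_ofReal, Complex.normSq_apply]
  simp only [Complex.sub_re, Complex.one_re, Complex.mul_re, Complex.sub_im, Complex.one_im,
    Complex.mul_im]
  linear_combination (1 / 4 * (z.re ^ 2 + z.im ^ 2) + 3 / 4) * hz

theorem absCos_le_one (a : ZMod N) : absCos a ≤ 1 := by
  nlinarith [absCos_sq a, absCos_nonneg a, sq_nonneg (sinChord a)]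

theorem absCos_le_exp (a : ZMod N) : absCos a ≤ Real.exp (-(sinChord a ^ 2 / 8)) := by
  refine le_of_sq_le_sq ?_ (Real.exp_pos _).le
  calc absCos a ^ 2 = 1 - sinChord a ^ 2 / 4 := absCos_sq a
    _ ≤ Real.exp (-(sinChord a ^ 2 / 4)) := Real.one_sub_le_exp_neg _
    _ = Real.exp (-(sinChord a ^ 2 / 8)) ^ 2 := by rw [← Real.exp_nat_mul]; ring_nf

theorem prod_absCos_le_exp (s : Finset ι) (w : ι → ZMod N) :
    ∏ i ∈ s, absCos (w i) ≤ Real.exp (-((∑ i ∈ s, sinChord (w i) ^ 2) / 8)) := by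
  rw [sum_div, ← sum_neg_distrib, Real.exp_sum]
  exact prod_le_prod (fun i _ ↦ absCos_nonneg _) fun i _ ↦ absCos_le_exp _

theorem sinChord_zero : sinChord (0 : ZMod N) = 0 := by simp [sinChord]

theorem sinChord_le_two (a : ZMod N) : sinChord a ≤ 2 := by
  nlinarith [absCos_sq a, sinChord_nonneg a, sq_nonneg (absCos a)]

theorem sinChord_add_le (a b : ZMod N) : sinChord (a + b) ≤ sinChord a + sinChord b := by
  have hsplit : 1 - stdAddChar (2 * (a + b))
      = (1 - stdAddChar (2 * a)) + stdAddChar (2 * a) * (1 - stdAddChar (2 * b)) := by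
    rw [mul_add, AddChar.map_add_eq_mul]
    ring
  unfold sinChord
  rw [hsplit]
  refine (norm_add_le _ _).trans_eq ?_
  rw [norm_mul, AddChar.norm_apply, one_mul]

/-- The signed sum `∑ i ∈ J, ± w i`, the sign of the `i`-th term being read off `x i`. -/
def signSum {R : Type*} [Ring R] (J : Finset ι) (w : ι → R) (x : ι → Bool) : R :=
  ∑ i ∈ J, signb R (x i) * w i

theorem signSum_const_mul {R : Type*} [CommRing R] (J : Finset ι) (t : R) (w : ι → R)
    (x : ι → Bool) : signSum J (fun i ↦ t * w i) x = t * signSum J w x := by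
  simp only [signSum, mul_sum, mul_left_comm]

theorem norm_expect_stdAddChar_signSum [Fintype ι] [DecidableEq ι] (J : Finset ι)
    (w : ι → ZMod N) :
    ‖𝔼 x : ι → Bool, (stdAddChar (signSum J w x) : ℂ)‖ = ∏ i ∈ J, absCos (w i) := by
  have hprod (x : ι → Bool) : (stdAddChar (signSum J w x) : ℂ)
      = ∏ i, if i ∈ J then stdAddChar (signb (ZMod N) (x i) * w i) else 1 := by
    rw [signSum, stdAddChar_sum, prod_ite_mem, univ_inter]
  have hindep := expect_pi_prod fun i b ↦
    if i ∈ J then (stdAddChar (signb (ZMod N) b * w i) : ℂ) else 1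
  rw [expect_congr rfl fun x _ ↦ hprod x, hindep, norm_prod, ← prod_subset (subset_univ J)]
  · refine prod_congr rfl fun i hi ↦ ?_
    rw [Fintype.expect_eq_sum_div_card]
    simp [hi, absCos, signb]
  · intro i _ hi
    simp [hi]

variable [Fintype Ω]

theorem prob_eq_sum_stdAddChar (X : Ω → ZMod N) (c : ZMod N) :
    (prob (fun ω ↦ X ω = c) : ℂ)
      = (∑ t : ZMod N, stdAddChar (-(t * c)) * 𝔼 ω, stdAddChar (t * X ω)) / N := by
  classical
  have hN : (N : ℂ) ≠ 0 := Nat.cast_ne_zero.2 (NeZero.ne N)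
  have hind (ω : Ω) : ((if X ω = c then 1 else 0 : ℝ) : ℂ)
      = (∑ t : ZMod N, stdAddChar (-(t * c)) * stdAddChar (t * X ω)) / N := by
    have hshift (t : ZMod N) : (stdAddChar (-(t * c)) * stdAddChar (t * X ω) : ℂ)
        = stdAddChar (t * (X ω - c)) := by
      rw [← AddChar.map_add_eq_mul]
      ring_nf
    rw [sum_congr rfl fun t _ ↦ hshift t, sum_stdAddChar_mul]
    by_cases hX : X ω = c <;> simp [hX, hN, sub_eq_zero]
  rw [prob_eq_expect, Complex.ofReal_expect, expect_congr rfl fun ω _ ↦ hind ω, ← expect_div,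
    expect_sum_comm]
  simp only [mul_expect]

theorem prob_signSum_eq_le [Fintype ι] [DecidableEq ι] (J : Finset ι) (w : ι → ZMod N)
    (c : ZMod N) :
    prob (fun x : ι → Bool ↦ signSum J w x = c) ≤
      (∑ t : ZMod N, ∏ i ∈ J, absCos (t * w i)) / N := by
  rw [← Real.norm_of_nonneg (prob_nonneg _), ← Complex.norm_real, prob_eq_sum_stdAddChar, norm_div,
    Complex.norm_natCast]
  gcongr
  refine (norm_sum_le _ _).trans_eq (sum_congr rfl fun t _ ↦ ?_)
  rw [norm_mul, AddChar.norm_apply, one_mul, ← norm_expect_stdAddChar_signSum]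
  simp only [signSum_const_mul]

theorem abs_prob_eq_sub_le [Nonempty Ω] (X : Ω → ZMod N) (c : ZMod N) {δ : ℝ} (hδ : 0 ≤ δ)
    (h : ∀ t : ZMod N, t ≠ 0 → ‖𝔼 ω, (stdAddChar (t * X ω) : ℂ)‖ ≤ δ) :
    |prob (fun ω ↦ X ω = c) - 1 / N| ≤ δ := by
  classical
  have hN : (0 : ℝ) < N := Nat.cast_pos.2 (NeZero.pos N)
  have hdiff : ((prob (fun ω ↦ X ω = c) - 1 / N : ℝ) : ℂ)
      = (∑ t ∈ univ.erase (0 : ZMod N), stdAddChar (-(t * c)) * 𝔼 ω, stdAddChar (t * X ω)) / N := by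
    rw [Complex.ofReal_sub, prob_eq_sum_stdAddChar, ← add_sum_erase _ _ (mem_univ (0 : ZMod N))]
    simp only [zero_mul, neg_zero, AddChar.map_zero_eq_one, one_mul, Fintype.expect_const]
    push_cast
    ring
  rw [← Real.norm_eq_abs, ← Complex.norm_real, hdiff, norm_div, Complex.norm_natCast,
    div_le_iff₀ hN]
  calc ‖∑ t ∈ univ.erase (0 : ZMod N), stdAddChar (-(t * c)) * 𝔼 ω, stdAddChar (t * X ω)‖
      ≤ ∑ _t ∈ univ.erase (0 : ZMod N), δ := by
        refine norm_sum_le_of_le _ fun t ht ↦ ?_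
        rw [norm_mul, AddChar.norm_apply, one_mul]
        exact h t (ne_of_mem_erase ht)
    _ ≤ δ * N := by
        rw [sum_const, card_erase_of_mem (mem_univ _), card_univ, ZMod.card, nsmul_eq_mul, mul_comm]
        gcongr
        exact Nat.sub_le _ _

end Characters

section ShiftedMatrix

/-- `M - lam • 1`, where `M` is the symmetric sign matrix determined by `ω`. -/
def shiftedSymMat {R : Type*} [Ring R] {n : ℕ} (lam : R) (ω : Fin n → Fin n → Bool) :
    Matrix (Fin n) (Fin n) R :=
  symMat R ω - lam • (1 : Matrix (Fin n) (Fin n) R)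

theorem shiftedSymMat_isSymm {R : Type*} [Ring R] {n : ℕ} (lam : R) (ω : Fin n → Fin n → Bool) :
    (shiftedSymMat lam ω).IsSymm := by
  ext i j
  simp [shiftedSymMat, symMat, Matrix.one_apply, min_comm, max_comm, eq_comm]

/-- Exchanges, between two samples, the data of the entries `(i, j)` of the symmetric matrix with
`i ∉ J` and `j ∈ J`. In the first sample these are stored at `(min i j, max i j)`, in the second
one at `(i, j)`, so that after the exchange row `i` of the matrix reads row `i` of the second
sample and distinct rows outside `J` become visibly independent. -/
def crossSwap {n : ℕ} (J : Finset (Fin n))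
    (q : (Fin n → Fin n → Bool) × (Fin n → Fin n → Bool)) :
    (Fin n → Fin n → Bool) × (Fin n → Fin n → Bool) :=
  (fun a b ↦ if a ≤ b ∧ a ∉ J ∧ b ∈ J then q.2 a b
    else if a ≤ b ∧ a ∈ J ∧ b ∉ J then q.2 b a else q.1 a b,
   fun i j ↦ if i ∉ J ∧ j ∈ J then q.1 (min i j) (max i j) else q.2 i j)

theorem crossSwap_involutive {n : ℕ} (J : Finset (Fin n)) : (crossSwap J).Involutive := by
  intro q
  refine Prod.ext ?_ ?_ <;> funext a b <;> unfold crossSwap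
  · rcases le_or_gt a b with h | h <;> by_cases ha : a ∈ J <;> by_cases hb : b ∈ J <;>
      simp [ha, hb, h, not_le.2]
  · rcases le_total a b with h | h <;> by_cases ha : a ∈ J <;> by_cases hb : b ∈ J <;>
      simp [ha, hb, h]

theorem shiftedSymMat_crossSwap_mulVec {R : Type*} [CommRing R] {n : ℕ} (lam : R)
    {J : Finset (Fin n)} (ω ζ : Fin n → Fin n → Bool) (w : Fin n → R) {i : Fin n} (hi : i ∉ J) :
    (shiftedSymMat lam (crossSwap J (ω, ζ)).1).mulVec w i
      = signSum J w (ζ i) + ∑ j ∈ Jᶜ, shiftedSymMat lam ω i j * w j := by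
  rw [Matrix.mulVec, dotProduct, ← sum_add_sum_compl J, signSum]
  congr 1 <;> refine sum_congr rfl fun j hj ↦ congrArg (· * w j) ?_
  · have hne : i ≠ j := fun h ↦ hi (h ▸ hj)
    rcases le_total i j with h | h <;> simp [shiftedSymMat, symMat, crossSwap, hi, hj, h, hne]
  · rw [mem_compl] at hj
    rcases le_total i j with h | h <;> simp [shiftedSymMat, symMat, crossSwap, hi, hj, h]

theorem prob_mulVec_eq_le {R : Type*} [CommRing R] {n : ℕ} (lam : R) (J : Finset (Fin n))
    (w u : Fin n → R) {ρ : ℝ} (hρ : ∀ c, prob (fun x : Fin n → Bool ↦ signSum J w x = c) ≤ ρ) :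
    prob (fun ω ↦ (shiftedSymMat lam ω).mulVec w = u) ≤ ρ ^ (n - #J) := by
  refine prob_le_of_forall_prob_perm_fst_le (crossSwap_involutive J).toPerm fun ω ↦ ?_
  let c (i : Fin n) : R := u i - ∑ j ∈ Jᶜ, shiftedSymMat lam ω i j * w j
  calc prob (fun ζ ↦ (shiftedSymMat lam (crossSwap J (ω, ζ)).1).mulVec w = u)
      ≤ prob (fun ζ : Fin n → Fin n → Bool ↦ ∀ i ∈ Jᶜ, signSum J w (ζ i) = c i) := by
        refine prob_mono fun ζ hζ i hi ↦ eq_sub_of_add_eq ?_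
        rw [← shiftedSymMat_crossSwap_mulVec lam ω ζ w (mem_compl.1 hi), hζ]
    _ ≤ ρ ^ #Jᶜ :=
        prob_forall_mem_le (E := fun i x ↦ signSum J w x = c i) fun i _ ↦ hρ (c i)
    _ = ρ ^ (n - #J) := by rw [card_compl, Fintype.card_fin]

theorem prob_signSum_singleton_le_half {ι R : Type*} [Fintype ι] [DecidableEq ι] [Ring R]
    {w : ι → R} {i : ι} (hi : w i ≠ -w i) (c : R) :
    prob (fun x : ι → Bool ↦ signSum {i} w x = c) ≤ 1 / 2 := by
  have hsign : prob (fun b ↦ signb R b * w i = c) ≤ 1 / 2 := by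
    classical
    have hinj : ¬(w i = c ∧ -w i = c) := fun h ↦ hi (h.1.trans h.2.symm)
    rw [prob_eq_expect, Fintype.expect_eq_sum_div_card, Fintype.sum_bool, Fintype.card_bool]
    simp only [signb, if_true, Bool.false_eq_true, if_false, one_mul, neg_one_mul]
    split_ifs <;> first | tauto | norm_num
  simpa [signSum] using
    prob_forall_mem_le (S := {i}) (E := fun j b ↦ signb R b * w j = c) (by simpa using hsign)

theorem prob_mulVec_eq_le_half {R : Type*} [CommRing R] [NoZeroDivisors R] (h2 : (2 : R) ≠ 0)
    {n : ℕ} (lam : R) {w : Fin n → R} (hw : w ≠ 0) (u : Fin n → R) :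
    prob (fun ω ↦ (shiftedSymMat lam ω).mulVec w = u) ≤ (1 / 2) ^ (n - 1) := by
  obtain ⟨i, hi⟩ := Function.ne_iff.1 hw
  have hne : w i ≠ -w i := fun h ↦
    mul_ne_zero h2 hi ((two_mul _).trans (eq_neg_iff_add_eq_zero.1 h))
  simpa using prob_mulVec_eq_le lam {i} w u (prob_signSum_singleton_le_half hne)

end ShiftedMatrix

section BohrSets

open ZMod (stdAddChar)

variable {N : ℕ} [NeZero N]

theorem sum_norm_sq_sum_stdAddChar (S : Finset (ZMod N)) :
    ∑ a : ZMod N, ‖∑ t ∈ S, (stdAddChar (t * a) : ℂ)‖ ^ 2 = N * #S := by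
  have hexpand (a : ZMod N) : ((‖∑ t ∈ S, (stdAddChar (t * a) : ℂ)‖ ^ 2 : ℝ) : ℂ)
      = ∑ t ∈ S, ∑ s ∈ S, stdAddChar (a * (t - s)) := by
    push_cast
    rw [← Complex.mul_conj', map_sum, sum_mul_sum]
    refine sum_congr rfl fun t _ ↦ sum_congr rfl fun s _ ↦ ?_
    rw [← stdAddChar_neg_eq_conj, ← AddChar.map_add_eq_mul]
    ring_nf
  have horth (t : ZMod N) (ht : t ∈ S) :
      ∑ a : ZMod N, ∑ s ∈ S, (stdAddChar (a * (t - s)) : ℂ) = N := by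
    rw [sum_comm]
    simp [sum_stdAddChar_mul, sub_eq_zero, ht]
  have hcomplex : ((∑ a : ZMod N, ‖∑ t ∈ S, (stdAddChar (t * a) : ℂ)‖ ^ 2 : ℝ) : ℂ) = N * #S := by
    rw [Complex.ofReal_sum, sum_congr rfl fun a _ ↦ hexpand a, sum_comm, sum_congr rfl horth,
      sum_const, nsmul_eq_mul, mul_comm]
  exact_mod_cast hcomplex

/-- The elements `t` of `S` for which `t * a` is close to `0` or `N / 2` on the circle `ℤ / N`. -/
def nearKernel (S : Finset (ZMod N)) (a : ZMod N) : Finset (ZMod N) :=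
  S.filter fun t ↦ sinChord (t * a) ≤ 1 / 20

theorem card_le_norm_sum_stdAddChar {S : Finset (ZMod N)} {a : ZMod N}
    (ha : (39 / 40 : ℝ) * #S ≤ #(nearKernel S a)) :
    (9 / 10 : ℝ) * #S ≤ ‖∑ t ∈ S, (stdAddChar (t * (2 * a)) : ℂ)‖ := by
  have hchord (t : ZMod N) : ‖1 - (stdAddChar (t * (2 * a)) : ℂ)‖ = sinChord (t * a) := by
    rw [sinChord, mul_left_comm]
  have hsplit : (#(nearKernel S a) : ℝ) + #{t ∈ S | ¬ sinChord (t * a) ≤ 1 / 20} = #S := by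
    exact_mod_cast card_filter_add_card_filter_not _
  have hnear : ∑ t ∈ S, sinChord (t * a) ≤ (1 / 10) * #S :=
    calc ∑ t ∈ S, sinChord (t * a)
        ≤ ∑ t ∈ S, (1 / 20 + if ¬ sinChord (t * a) ≤ 1 / 20 then 2 else 0) := by
          refine sum_le_sum fun t _ ↦ ?_
          split_ifs with h
          · linarith
          · linarith [sinChord_le_two (t * a)]
      _ = (1 / 20) * #S + 2 * #{t ∈ S | ¬ sinChord (t * a) ≤ 1 / 20} := by
          rw [sum_add_distrib, ← sum_filter, sum_const, sum_const, nsmul_eq_mul, nsmul_eq_mul]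
          ring
      _ ≤ (1 / 10) * #S := by linarith
  have htriangle : (#S : ℝ) ≤ ‖∑ t ∈ S, (1 - (stdAddChar (t * (2 * a)) : ℂ))‖
      + ‖∑ t ∈ S, (stdAddChar (t * (2 * a)) : ℂ)‖ := by
    refine le_trans (le_of_eq ?_) (norm_add_le _ _)
    simp
  have hsum := norm_sum_le S fun t ↦ 1 - (stdAddChar (t * (2 * a)) : ℂ)
  simp only [hchord] at hsum
  linarith

theorem card_filter_nearKernel_large_mul_le (h2 : IsUnit (2 : ZMod N)) {S : Finset (ZMod N)}
    (hS : S.Nonempty) :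
    (#{a : ZMod N | (39 / 40 : ℝ) * #S ≤ #(nearKernel S a)} : ℝ) * ((81 / 100) * #S) ≤ N := by
  set L : Finset (ZMod N) := {a | (39 / 40 : ℝ) * #S ≤ #(nearKernel S a)}
  refine le_of_mul_le_mul_right ?_ (Nat.cast_pos.2 hS.card_pos : (0 : ℝ) < #S)
  calc (#L : ℝ) * ((81 / 100) * #S) * #S = ∑ _a ∈ L, ((9 / 10 : ℝ) * #S) ^ 2 := by
        rw [sum_const, nsmul_eq_mul]
        ring
    _ ≤ ∑ a ∈ L, ‖∑ t ∈ S, (stdAddChar (t * (2 * a)) : ℂ)‖ ^ 2 := by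
        gcongr with a ha
        exact card_le_norm_sum_stdAddChar (by simpa [L] using ha)
    _ ≤ ∑ a, ‖∑ t ∈ S, (stdAddChar (t * (2 * a)) : ℂ)‖ ^ 2 :=
        sum_le_sum_of_subset_of_nonneg (subset_univ _) fun _ _ _ ↦ by positivity
    _ = ∑ a, ‖∑ t ∈ S, (stdAddChar (t * a) : ℂ)‖ ^ 2 :=
        Fintype.sum_equiv (h2.unit.mulLeft) _ _ fun _ ↦ rfl
    _ = N * #S := sum_norm_sq_sum_stdAddChar S

/-- The Bohr set of the frequencies `t`, for the chord `sinChord` and radius `1 / 20`. -/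
def bohrSet {d : ℕ} (t : Fin d → ZMod N) : Finset (ZMod N) :=
  {a | ∀ l, sinChord (t l * a) ≤ 1 / 20}

theorem zero_mem_bohrSet {d : ℕ} (t : Fin d → ZMod N) : 0 ∈ bohrSet t := by
  simp [bohrSet, sinChord_zero]

theorem sum_card_bohrSet (S : Finset (ZMod N)) (d : ℕ) :
    ∑ t ∈ Fintype.piFinset fun _ : Fin d ↦ S, #(bohrSet t)
      = ∑ a : ZMod N, #(nearKernel S a) ^ d := by
  have hdouble := sum_card_bipartiteAbove_eq_sum_card_bipartiteBelow
    (s := Fintype.piFinset fun _ : Fin d ↦ S) (t := (univ : Finset (ZMod N)))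
    fun t a ↦ ∀ l, sinChord (t l * a) ≤ 1 / 20
  refine hdouble.trans (sum_congr rfl fun a _ ↦ ?_)
  have hpi : bipartiteBelow (fun t a ↦ ∀ l, sinChord (t l * a) ≤ 1 / 20)
      (Fintype.piFinset fun _ : Fin d ↦ S) a = Fintype.piFinset fun _ ↦ nearKernel S a := by
    ext t
    simp [bipartiteBelow, nearKernel, forall_and]
  rw [hpi, Fintype.card_piFinset_const]

theorem sum_card_nearKernel_pow_le (S : Finset (ZMod N)) (d : ℕ) :
    ∑ a : ZMod N, (#(nearKernel S a) : ℝ) ^ d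
      ≤ #S ^ d * (#{a : ZMod N | (39 / 40 : ℝ) * #S ≤ #(nearKernel S a)} + N * (39 / 40) ^ d) := by
  set L : Finset (ZMod N) := {a | (39 / 40 : ℝ) * #S ≤ #(nearKernel S a)} with hL
  have hpoint (a : ZMod N) :
      (#(nearKernel S a) : ℝ) ^ d ≤ #S ^ d * ((if a ∈ L then 1 else 0) + (39 / 40) ^ d) := by
    split_ifs with ha
    · calc (#(nearKernel S a) : ℝ) ^ d ≤ #S ^ d * 1 := by
            rw [mul_one]
            gcongr
            exact filter_subset _ _
        _ ≤ #S ^ d * (1 + (39 / 40) ^ d) := by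
            gcongr
            exact le_add_of_nonneg_right (by positivity)
    · have hsmall : (#(nearKernel S a) : ℝ) ≤ #S * (39 / 40) := by
        rw [hL, mem_filter_univ, not_le] at ha
        linarith
      rw [zero_add, ← mul_pow]
      gcongr
  refine (sum_le_sum fun a _ ↦ hpoint a).trans_eq ?_
  simp [← mul_sum, sum_add_distrib, ZMod.card]

/-- A uniformly random tuple from `S` has a small Bohr set on average: an `a` either belongs to the
small set of points that most of `S` nearly kills, or survives with probability at most
`(39 / 40) ^ d`. -/
theorem exists_card_bohrSet_mul_card_le (h2 : IsUnit (2 : ZMod N)) {S : Finset (ZMod N)}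
    (hS : S.Nonempty) {d : ℕ} (hd : (N : ℝ) * (39 / 40) ^ d ≤ 1 / 5) :
    ∃ t : Fin d → ZMod N, (∀ l, t l ∈ S) ∧ 2 * (#(bohrSet t) * #S) ≤ 3 * N := by
  have hS0 : (0 : ℝ) < #S := Nat.cast_pos.2 hS.card_pos
  have hSN : (#S : ℝ) ≤ N := mod_cast (card_le_univ S).trans_eq (ZMod.card N)
  have hL := card_filter_nearKernel_large_mul_le h2 hS
  have hmean : ∑ t ∈ Fintype.piFinset fun _ : Fin d ↦ S, (#(bohrSet t) : ℝ)
      ≤ ∑ _t ∈ Fintype.piFinset fun _ : Fin d ↦ S, (3 / 2 : ℝ) * N / #S := by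
    calc ∑ t ∈ Fintype.piFinset fun _ : Fin d ↦ S, (#(bohrSet t) : ℝ)
        = ∑ a : ZMod N, (#(nearKernel S a) : ℝ) ^ d := mod_cast sum_card_bohrSet S d
      _ ≤ _ := sum_card_nearKernel_pow_le S d
      _ ≤ #S ^ d * ((3 / 2 : ℝ) * N / #S) := by
          gcongr
          rw [le_div_iff₀ hS0]
          nlinarith
      _ = _ := by rw [sum_const, Fintype.card_piFinset_const, nsmul_eq_mul, Nat.cast_pow]
  obtain ⟨t, ht, hle⟩ := exists_le_of_sum_le (Fintype.piFinset_nonempty.2 fun _ ↦ hS) hmean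
  rw [le_div_iff₀ hS0] at hle
  refine ⟨t, Fintype.mem_piFinset.1 ht, ?_⟩
  have : (2 : ℝ) * (#(bohrSet t) * #S) ≤ 3 * N := by linarith
  exact_mod_cast this

end BohrSets

section LevelSets

open scoped Pointwise

variable {ι : Type*}

/-- The multipliers `t` for which `∑ i ∈ B, sinChord (t * w i) ^ 2 ≤ R`; outside this set the
character sum `∏ i ∈ B, absCos (t * w i)` is at most `exp (-R / 8)`. -/
def levelSet {N : ℕ} [NeZero N] (B : Finset ι) (w : ι → ZMod N) (R : ℝ) : Finset (ZMod N) :=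
  {t | ∑ i ∈ B, sinChord (t * w i) ^ 2 ≤ R}

theorem zero_mem_levelSet {N : ℕ} [NeZero N] (B : Finset ι) (w : ι → ZMod N) {R : ℝ} (hR : 0 ≤ R) :
    0 ∈ levelSet B w R := by
  simp [levelSet, sinChord_zero, hR]

theorem levelSet_add_subset {N : ℕ} [NeZero N] (B : Finset ι) (w : ι → ZMod N) (R : ℝ) :
    levelSet B w R + levelSet B w R ⊆ levelSet B w (4 * R) := by
  intro x hx
  obtain ⟨s, hs, t, ht, rfl⟩ := mem_add.1 hx
  rw [levelSet, mem_filter_univ] at hs ht ⊢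
  have hpoint (i : ι) : sinChord ((s + t) * w i) ^ 2
      ≤ 2 * sinChord (s * w i) ^ 2 + 2 * sinChord (t * w i) ^ 2 := by
    rw [add_mul]
    nlinarith [sinChord_add_le (s * w i) (t * w i), sinChord_nonneg (s * w i + t * w i),
      sq_nonneg (sinChord (s * w i) - sinChord (t * w i))]
  refine (sum_le_sum fun i _ ↦ hpoint i).trans ?_
  rw [sum_add_distrib, ← mul_sum, ← mul_sum]
  linarith

variable {p : ℕ} [Fact p.Prime]

theorem min_le_card_levelSet_four_mul {B : Finset ι} {w : ι → ZMod p} {R : ℝ} (hR : 0 ≤ R) {T : ℕ}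
    (h : min p (T + 1) ≤ #(levelSet B w R)) : min p (2 * T + 1) ≤ #(levelSet B w (4 * R)) := by
  have hne : (levelSet B w R).Nonempty := ⟨0, zero_mem_levelSet B w hR⟩
  have hgrow := ZMod.cauchy_davenport (Fact.out : p.Prime) hne hne
  have hsub := card_le_card (levelSet_add_subset B w R)
  omega

theorem min_le_card_levelSet_256_mul {B : Finset ι} {w : ι → ZMod p} {R : ℝ} (hR : 0 ≤ R) {T : ℕ}
    (hT : 2 ≤ T) (h : T ≤ #(levelSet B w R)) : min p (8 * T) ≤ #(levelSet B w (256 * R)) := by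
  have h0 : min p ((T - 1) + 1) ≤ #(levelSet B w R) := by omega
  have h4 := min_le_card_levelSet_four_mul (by positivity) <|
    min_le_card_levelSet_four_mul (by positivity) <|
    min_le_card_levelSet_four_mul (by positivity) <| min_le_card_levelSet_four_mul hR h0
  rw [show 4 * (4 * (4 * (4 * R))) = 256 * R by ring] at h4
  omega

end LevelSets

section Counting

variable {ι κ : Type*}

theorem exists_fin_forall_mem_exists_eq [Nonempty ι] {X : Finset ι} {E : ℕ} (hX : #X ≤ E) :
    ∃ g : Fin E → ι, ∀ i ∈ X, ∃ k, g k = i := by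
  obtain ⟨f⟩ : Nonempty (X ↪ Fin E) := Function.Embedding.nonempty_of_card_le (by simpa using hX)
  exact ⟨Function.extend f Subtype.val fun _ ↦ Classical.arbitrary ι,
    fun i hi ↦ ⟨f ⟨i, hi⟩, f.injective.extend_apply _ _ _⟩⟩

theorem card_filter_notMem_bohrSet_le {N : ℕ} [NeZero N] {d R : ℕ} {B : Finset ι} {w : ι → ZMod N}
    {t : Fin d → ZMod N} (h : ∀ l, t l ∈ levelSet B w R) :
    #{i ∈ B | w i ∉ bohrSet t} ≤ d * (400 * R) := by
  classical
  have hmarkov (l : Fin d) : #{i ∈ B | ¬ sinChord (t l * w i) ≤ 1 / 20} ≤ 400 * R := by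
    have hlevel := h l
    rw [levelSet, mem_filter_univ] at hlevel
    have : (#{i ∈ B | ¬ sinChord (t l * w i) ≤ 1 / 20} : ℝ) * (1 / 400) ≤ R :=
      calc (#{i ∈ B | ¬ sinChord (t l * w i) ≤ 1 / 20} : ℝ) * (1 / 400)
          = ∑ i ∈ B with ¬ sinChord (t l * w i) ≤ 1 / 20, (1 / 20 : ℝ) ^ 2 := by
            rw [sum_const, nsmul_eq_mul]
            norm_num
        _ ≤ ∑ i ∈ B with ¬ sinChord (t l * w i) ≤ 1 / 20, sinChord (t l * w i) ^ 2 := by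
            gcongr with i hi
            exact (not_le.1 (mem_filter.1 hi).2).le
        _ ≤ ∑ i ∈ B, sinChord (t l * w i) ^ 2 :=
            sum_le_sum_of_subset_of_nonneg (filter_subset _ _) fun _ _ _ ↦ by positivity
        _ ≤ R := hlevel
    have : (#{i ∈ B | ¬ sinChord (t l * w i) ≤ 1 / 20} : ℝ) ≤ 400 * R := by linarith
    exact_mod_cast this
  have hcover : {i ∈ B | w i ∉ bohrSet t}
      ⊆ univ.biUnion fun l ↦ {i ∈ B | ¬ sinChord (t l * w i) ≤ 1 / 20} := by
    intro i
    simp [bohrSet]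
  calc #{i ∈ B | w i ∉ bohrSet t} ≤ ∑ l, #{i ∈ B | ¬ sinChord (t l * w i) ≤ 1 / 20} :=
        (card_le_card hcover).trans card_biUnion_le
    _ ≤ ∑ _l : Fin d, 400 * R := sum_le_sum fun l _ ↦ hmarkov l
    _ = d * (400 * R) := by simp

variable [Fintype ι] [DecidableEq ι]

theorem card_filter_card_notMem_le [Nonempty ι] [Fintype κ] [DecidableEq κ] {A : ι → Finset κ}
    (hA : ∀ i, (A i).Nonempty) {M : ℕ} (hM : ∀ i, #(A i) ≤ M) (E : ℕ) :
    #{w : ι → κ | #{i | w i ∉ A i} ≤ E}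
      ≤ (Fintype.card ι * Fintype.card κ) ^ E * M ^ Fintype.card ι := by
  let overwrite (q : ((Fin E → ι) × (Fin E → κ)) × (ι → κ)) : ι → κ :=
    Function.extend q.1.1 q.1.2 q.2
  have hcover : ({w : ι → κ | #{i | w i ∉ A i} ≤ E} : Finset (ι → κ)) ⊆
      (univ ×ˢ Fintype.piFinset A).image overwrite := by
    intro w hw
    obtain ⟨g, hg⟩ := exists_fin_forall_mem_exists_eq ((mem_filter_univ w).1 hw)
    refine mem_image.2 ⟨((g, w ∘ g), fun i ↦ if w i ∈ A i then w i else (hA i).choose), ?_, ?_⟩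
    · refine mem_product.2 ⟨mem_univ _, Fintype.mem_piFinset.2 fun i ↦ ?_⟩
      dsimp only
      split_ifs with hi
      exacts [hi, (hA i).choose_spec]
    · funext i
      by_cases hi : ∃ k, g k = i
      · obtain ⟨k, rfl⟩ := hi
        have hfactors : (w ∘ g).FactorsThrough g := fun _ _ h ↦ congrArg w h
        exact hfactors.extend_apply _ k
      · have hmem : w i ∈ A i := by
          by_contra h
          exact hi (hg i (by simpa using h))
        simp only [overwrite, Function.extend_apply' _ _ _ hi, if_pos hmem]
  calc #{w : ι → κ | #{i | w i ∉ A i} ≤ E}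
      ≤ #((univ : Finset ((Fin E → ι) × (Fin E → κ))) ×ˢ Fintype.piFinset A) :=
        (card_le_card hcover).trans card_image_le
    _ = (Fintype.card ι * Fintype.card κ) ^ E * ∏ i, #(A i) := by
        simp [mul_pow]
    _ ≤ (Fintype.card ι * Fintype.card κ) ^ E * M ^ Fintype.card ι := by
        gcongr
        exact (prod_le_prod' fun i _ ↦ hM i).trans_eq (prod_const M)

/-- The part of the fibre of `f` over `j` that avoids `Z`. -/
def block {r : ℕ} (Z : Finset ι) (f : ι → Fin r) (j : Fin r) : Finset ι :=
  {i | i ∉ Z ∧ f i = j}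

variable {p : ℕ} [Fact p.Prime]

theorem exists_bohrSets_of_le_card_levelSet (h2 : (2 : ZMod p) ≠ 0) {r T d R : ℕ} {Z : Finset ι}
    {f : ι → Fin r} {w : ι → ZMod p} (hT : 2 ≤ T) (hd : (p : ℝ) * (39 / 40) ^ d ≤ 1 / 5)
    (hw : ∀ j, T ≤ #(levelSet (block Z f j) w R)) :
    ∃ t : Fin r → Fin d → ZMod p, (∀ j, #(bohrSet (t j)) ≤ 3 * p / (2 * min p (8 * T))) ∧
      #{i | w i ∉ bohrSet (t (f i))} ≤ #Z + r * (d * (400 * (256 * R))) := by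
  have htuple (j : Fin r) : ∃ t : Fin d → ZMod p,
      (∀ l, t l ∈ levelSet (block Z f j) w (256 * R)) ∧
        #(bohrSet t) ≤ 3 * p / (2 * min p (8 * T)) := by
    have hgrow := min_le_card_levelSet_256_mul R.cast_nonneg hT (hw j)
    obtain ⟨t, ht, hcard⟩ := exists_card_bohrSet_mul_card_le h2.isUnit
      ⟨0, zero_mem_levelSet (block Z f j) w (by positivity : (0 : ℝ) ≤ 256 * R)⟩ hd
    have hpos : 0 < min p (8 * T) := lt_min (Fact.out : p.Prime).pos (by omega)
    refine ⟨t, ht, (Nat.le_div_iff_mul_le (by positivity)).2 (le_trans ?_ hcard)⟩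
    rw [mul_left_comm]
    gcongr
  choose t ht hcard using htuple
  refine ⟨t, hcard, ?_⟩
  have hcover : ({i | w i ∉ bohrSet (t (f i))} : Finset ι)
      ⊆ Z ∪ univ.biUnion fun j ↦ {i ∈ block Z f j | w i ∉ bohrSet (t j)} := by
    intro i hi
    by_cases hZ : i ∈ Z
    · exact mem_union_left _ hZ
    · simpa [block, hZ] using hi
  refine (card_le_card hcover).trans ((card_union_le _ _).trans ?_)
  gcongr
  calc #(univ.biUnion fun j ↦ {i ∈ block Z f j | w i ∉ bohrSet (t j)})
      ≤ ∑ j, #{i ∈ block Z f j | w i ∉ bohrSet (t j)} := card_biUnion_le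
    _ ≤ ∑ _j : Fin r, d * (400 * (256 * R)) :=
        sum_le_sum fun j _ ↦ card_filter_notMem_bohrSet_le fun l ↦ by simpa using ht j l
    _ = r * (d * (400 * (256 * R))) := by simp

/-- The number of ways to choose `d` generators for each of `r` Bohr sets of `ZMod p`, together with
the positions and the values of the exceptional coordinates of a vector of length `n`, as they arise
in `exists_bohrSets_of_le_card_levelSet` when `#Z = z`. -/
def choiceCount (n p z r d R : ℕ) : ℕ :=
  (p ^ d) ^ r * (n * p) ^ (z + r * (d * (400 * (256 * R))))

theorem card_filter_forall_le_card_levelSet_le [Nonempty ι] (h2 : (2 : ZMod p) ≠ 0) {r T d : ℕ}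
    (R : ℕ) (Z : Finset ι) (f : ι → Fin r) (hT : 2 ≤ T) (hd : (p : ℝ) * (39 / 40) ^ d ≤ 1 / 5) :
    #{w : ι → ZMod p | ∀ j, T ≤ #(levelSet (block Z f j) w R)}
      ≤ choiceCount (Fintype.card ι) p #Z r d R
        * (3 * p / (2 * min p (8 * T))) ^ Fintype.card ι := by
  rw [choiceCount, mul_assoc]
  set E := #Z + r * (d * (400 * (256 * R)))
  set M := 3 * p / (2 * min p (8 * T))
  let tuples : Finset (Fin r → Fin d → ZMod p) := {t | ∀ j, #(bohrSet (t j)) ≤ M}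
  have hcover : ({w : ι → ZMod p | ∀ j, T ≤ #(levelSet (block Z f j) w R)} : Finset (ι → ZMod p))
      ⊆ tuples.biUnion fun t ↦ {w | #{i | w i ∉ bohrSet (t (f i))} ≤ E} := by
    intro w hw
    obtain ⟨t, ht, hE⟩ :=
      exists_bohrSets_of_le_card_levelSet h2 hT hd ((mem_filter_univ _).1 hw)
    exact mem_biUnion.2 ⟨t, (mem_filter_univ _).2 ht, (mem_filter_univ _).2 hE⟩
  calc #{w : ι → ZMod p | ∀ j, T ≤ #(levelSet (block Z f j) w R)}
      ≤ ∑ t ∈ tuples, #{w : ι → ZMod p | #{i | w i ∉ bohrSet (t (f i))} ≤ E} :=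
        (card_le_card hcover).trans card_biUnion_le
    _ ≤ ∑ _t ∈ tuples, (Fintype.card ι * p) ^ E * M ^ Fintype.card ι := by
        refine sum_le_sum fun t ht ↦ ?_
        have hcount := card_filter_card_notMem_le (A := fun i ↦ bohrSet (t (f i)))
          (fun i ↦ ⟨0, zero_mem_bohrSet _⟩) (fun i ↦ (mem_filter_univ _).1 ht (f i)) E
        rwa [ZMod.card] at hcount
    _ ≤ (p ^ d) ^ r * ((Fintype.card ι * p) ^ E * M ^ Fintype.card ι) := by
        rw [sum_const, smul_eq_mul]
        gcongr
        refine (card_le_univ _).trans_eq ?_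
        simp [ZMod.card]

end Counting

section StructuredVectors

variable {ι : Type*}

theorem two_pow_le_exp (k : ℕ) : (2 : ℝ) ^ k ≤ Real.exp k := by
  rw [← Real.exp_one_pow]
  gcongr
  linarith [Real.add_one_le_exp (1 : ℝ)]

theorem sum_sinChord_sq_le {N : ℕ} [NeZero N] {s : Finset ι} {w : ι → ZMod N} {k : ℕ}
    (h : (1 / 2 : ℝ) ^ k ≤ ∏ i ∈ s, absCos (w i)) : ∑ i ∈ s, sinChord (w i) ^ 2 ≤ 8 * k := by
  have hexp : Real.exp (-k) ≤ Real.exp (-((∑ i ∈ s, sinChord (w i) ^ 2) / 8)) :=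
    calc Real.exp (-k) ≤ (1 / 2) ^ k := by
          rw [Real.exp_neg, one_div, inv_pow]
          gcongr
          exact two_pow_le_exp k
      _ ≤ _ := h.trans (prod_absCos_le_exp s w)
  linarith [Real.exp_le_exp.1 hexp]

theorem prob_signSum_eq_le_card_levelSet {N : ℕ} [NeZero N] [Fintype ι] [DecidableEq ι]
    (B : Finset ι) (w : ι → ZMod N) {R : ℝ} (hR : 0 ≤ R) (hN : N ≤ Real.exp (R / 8)) (c : ZMod N) :
    prob (fun x : ι → Bool ↦ signSum B w x = c) ≤ 2 * #(levelSet B w R) / N := by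
  have hN0 : (0 : ℝ) < N := Nat.cast_pos.2 (NeZero.pos N)
  refine (prob_signSum_eq_le B w c).trans ?_
  gcongr
  have hterm (t : ZMod N) :
      ∏ i ∈ B, absCos (t * w i) ≤ (if t ∈ levelSet B w R then 1 else 0) + 1 / N := by
    split_ifs with ht
    · exact (prod_le_one (fun _ _ ↦ absCos_nonneg _) fun _ _ ↦ absCos_le_one _).trans
        (le_add_of_nonneg_right (by positivity))
    · rw [levelSet, mem_filter_univ, not_le] at ht
      refine (prod_absCos_le_exp B fun i ↦ t * w i).trans ?_
      rw [zero_add, Real.exp_neg, one_div]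
      gcongr
      exact hN.trans (by gcongr)
  have hone : (1 : ℝ) ≤ #(levelSet B w R) :=
    mod_cast card_pos.2 ⟨0, zero_mem_levelSet B w hR⟩
  calc ∑ t, ∏ i ∈ B, absCos (t * w i)
      ≤ ∑ t : ZMod N, ((if t ∈ levelSet B w R then 1 else 0) + 1 / N : ℝ) :=
        sum_le_sum fun t _ ↦ hterm t
    _ = #(levelSet B w R) + 1 := by
        simp [sum_add_distrib, ZMod.card, hN0.ne']
    _ ≤ 2 * #(levelSet B w R) := by linarith

variable {p : ℕ} [Fact p.Prime] [Fintype ι] [DecidableEq ι]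

/-- The nonzero vectors whose character sum over the coordinates outside `Z` is not small: those
are the possible obstructions to the equidistribution of random signed sums. -/
def IsStructured (Z : Finset ι) (w : ι → ZMod p) : Prop :=
  w ≠ 0 ∧ (1 / 2 : ℝ) ^ #Z ≤ ∏ i ∈ Zᶜ, absCos (w i)

theorem IsStructured.two_le_card_levelSet {Z B : Finset ι} {w : ι → ZMod p}
    (hw : IsStructured Z w) (hB : B ⊆ Zᶜ) : 2 ≤ #(levelSet B w (8 * #Z : ℕ)) := by
  rw [← card_pair (zero_ne_one (α := ZMod p))]
  refine card_le_card (insert_subset (zero_mem_levelSet B w (Nat.cast_nonneg _)) ?_)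
  rw [singleton_subset_iff, levelSet, mem_filter_univ]
  simp only [one_mul]
  push_cast
  exact (sum_le_sum_of_subset_of_nonneg hB fun _ _ _ ↦ by positivity).trans
    (sum_sinChord_sq_le hw.2)

/-- The size of the smallest among the level sets of the `r` blocks. -/
def minLevelCard {r : ℕ} [NeZero r] (Z : Finset ι) (f : ι → Fin r) (w : ι → ZMod p) (R : ℝ) : ℕ :=
  univ.inf' univ_nonempty fun j ↦ #(levelSet (block Z f j) w R)

theorem minLevelCard_le {r : ℕ} [NeZero r] (Z : Finset ι) (f : ι → Fin r) (w : ι → ZMod p)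
    (R : ℝ) : minLevelCard Z f w R ≤ p :=
  (inf'_le _ (mem_univ 0)).trans ((card_le_univ _).trans_eq (ZMod.card p))

theorem IsStructured.two_le_minLevelCard {r : ℕ} [NeZero r] {Z : Finset ι} {w : ι → ZMod p}
    (hw : IsStructured Z w) (f : ι → Fin r) : 2 ≤ minLevelCard Z f w (8 * #Z : ℕ) :=
  le_inf' _ _ fun _ _ ↦ hw.two_le_card_levelSet fun i hi ↦
    mem_compl.2 ((mem_filter_univ i).1 hi).1

theorem card_filter_le_minLevelCard_le [Nonempty ι] (h2 : (2 : ZMod p) ≠ 0) {r T d : ℕ} [NeZero r]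
    (R : ℕ) (Z : Finset ι) (f : ι → Fin r) (hT : 2 ≤ T) (hd : (p : ℝ) * (39 / 40) ^ d ≤ 1 / 5) :
    #{w : ι → ZMod p | T ≤ minLevelCard Z f w R}
      ≤ choiceCount (Fintype.card ι) p #Z r d R
        * (3 * p / (2 * min p (8 * T))) ^ Fintype.card ι := by
  simpa only [minLevelCard, le_inf'_iff, mem_univ, true_imp_iff] using
    card_filter_forall_le_card_levelSet_le h2 R Z f hT hd

variable {n : ℕ}

theorem card_block_ofNat_le {r : ℕ} [NeZero r] (Z : Finset (Fin n)) (j : Fin r) :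
    #(block Z (fun i ↦ Fin.ofNat r i) j) ≤ n / r + 1 := by
  rw [← card_range (n / r + 1)]
  refine card_le_card_of_injOn (fun i ↦ i.val / r) (fun i _ ↦ ?_) fun a ha b hb hdiv ↦ ?_
  · simpa [Nat.lt_succ_iff] using Nat.div_le_div_right i.2.le
  · rw [mem_coe, block, mem_filter_univ] at ha hb
    have hmod : a.val % r = b.val % r := congrArg Fin.val (ha.2.trans hb.2.symm)
    change a.val / r = b.val / r at hdiv
    rw [Fin.ext_iff, ← Nat.div_add_mod a.val r, hmod, hdiv, Nat.div_add_mod]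

theorem prob_mulVec_eq_le_minLevelCard {r m : ℕ} [NeZero r] {Z : Finset (Fin n)}
    {f : Fin n → Fin r} (hm : ∀ j, #(block Z f j) ≤ m) {R : ℝ} (hR : 0 ≤ R)
    (hp : p ≤ Real.exp (R / 8)) (lam : ZMod p) {w : Fin n → ZMod p}
    (hw : 2 * minLevelCard Z f w R ≤ p) (u : Fin n → ZMod p) :
    prob (fun ω ↦ (shiftedSymMat lam ω).mulVec w = u)
      ≤ (2 * minLevelCard Z f w R / p) ^ (n - m) := by
  have hp0 : (0 : ℝ) < p := Nat.cast_pos.2 (Fact.out : p.Prime).pos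
  obtain ⟨j, -, hj⟩ := exists_mem_eq_inf' univ_nonempty fun j ↦ #(levelSet (block Z f j) w R)
  change minLevelCard Z f w R = _ at hj
  refine (prob_mulVec_eq_le lam (block Z f j) w u fun c ↦
    hj ▸ prob_signSum_eq_le_card_levelSet _ w hR hp c).trans ?_
  refine pow_le_pow_of_le_one (by positivity) ?_ (Nat.sub_le_sub_left (hm j) n)
  rw [div_le_one hp0]
  exact_mod_cast hw

theorem pow_mul_pow_sub_le {a x q : ℝ} (ha : 0 ≤ a) (hx : 0 ≤ x) (hax : a * x ≤ 1 / 2)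
    (hxq : 1 ≤ x * q) {m : ℕ} (hmn : m ≤ n) : a ^ n * x ^ (n - m) ≤ q ^ m * (1 / 2) ^ (n - 1) :=
  have hq : 0 ≤ q := by
    by_contra! hq
    linarith [mul_nonpos_of_nonneg_of_nonpos hx hq.le]
  calc a ^ n * x ^ (n - m) ≤ a ^ n * (x ^ (n - m) * (x * q) ^ m) := by
        gcongr
        exact le_mul_of_one_le_right (by positivity) (one_le_pow₀ hxq)
    _ = q ^ m * (a * x) ^ n := by
        rw [mul_pow, mul_pow, ← mul_assoc (x ^ (n - m)), ← pow_add, Nat.sub_add_cancel hmn]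
        ring
    _ ≤ q ^ m * (1 / 2) ^ n := by gcongr
    _ ≤ q ^ m * (1 / 2) ^ (n - 1) := by
        gcongr ?_ * ?_
        exact pow_le_pow_of_le_one (by norm_num) (by norm_num) (Nat.sub_le _ _)

/-- If `p ≤ 8 * T`, then the Bohr sets are trivial and a probability of `1 / 2` per row suffices.
Otherwise they have at most `3 * p / (16 * T)` elements, while each row contributes a probability of
at most `2 * T / p`. -/
theorem pow_mul_prob_mulVec_eq_le (h2 : (2 : ZMod p) ≠ 0) {r m T R : ℕ} [NeZero r]
    {Z : Finset (Fin n)} {f : Fin n → Fin r} (hm : ∀ j, #(block Z f j) ≤ m) (hmn : m ≤ n)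
    (hp : p ≤ Real.exp (R / 8)) (lam : ZMod p) (u : Fin n → ZMod p) {w : Fin n → ZMod p}
    (hw0 : w ≠ 0) (hT : 0 < T) (hw : minLevelCard Z f w R = T) :
    ((3 * p / (2 * min p (8 * T)) : ℕ) : ℝ) ^ n
        * prob (fun ω ↦ (shiftedSymMat lam ω).mulVec w = u)
      ≤ p ^ m * (1 / 2) ^ (n - 1) := by
  have hpos : 0 < p := (Fact.out : p.Prime).pos
  have hp0 : (0 : ℝ) < p := Nat.cast_pos.2 hpos
  have hp1 : (1 : ℝ) ≤ p := Nat.one_le_cast.2 hpos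
  set M := 3 * p / (2 * min p (8 * T)) with hM
  rcases le_or_gt p (8 * T) with hsat | hunsat
  · have hM1 : M = 1 := by
      rw [hM, min_eq_left hsat, Nat.div_eq_iff (by positivity)]
      omega
    rw [hM1, Nat.cast_one, one_pow]
    exact mul_le_mul (one_le_pow₀ hp1) (prob_mulVec_eq_le_half h2 lam hw0 u) (prob_nonneg _)
      (by positivity)
  · have hMT : (M : ℝ) * (2 * T / p) ≤ 1 / 2 := by
      have hM8 : M * (2 * (8 * T)) ≤ 3 * p := by
        rw [hM, min_eq_right hunsat.le]
        exact Nat.div_mul_le_self _ _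
      have : (M : ℝ) * (2 * (8 * T)) ≤ 3 * p := mod_cast hM8
      rw [mul_div_assoc', div_le_iff₀ hp0]
      linarith
    have hTp : (1 : ℝ) ≤ 2 * T / p * p := by
      rw [div_mul_cancel₀ _ hp0.ne']
      exact_mod_cast (by omega : 1 ≤ 2 * T)
    have hprob := prob_mulVec_eq_le_minLevelCard hm (Nat.cast_nonneg _) hp lam
      (w := w) (by omega) u
    rw [hw] at hprob
    exact (mul_le_mul_of_nonneg_left hprob (by positivity)).trans
      (pow_mul_pow_sub_le M.cast_nonneg (by positivity) hMT hTp hmn)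

theorem sum_prob_mulVec_eq_le (h2 : (2 : ZMod p) ≠ 0) (hn : 0 < n) {r m d T : ℕ} [NeZero r]
    {Z : Finset (Fin n)} {f : Fin n → Fin r} (hm : ∀ j, #(block Z f j) ≤ m) (hmn : m ≤ n)
    (hp : p ≤ Real.exp #Z) (hd : (p : ℝ) * (39 / 40) ^ d ≤ 1 / 5) (lam : ZMod p)
    (u : Fin n → ZMod p) (hT : 2 ≤ T) {S : Finset (Fin n → ZMod p)}
    (hS : ∀ w ∈ S, w ≠ 0 ∧ minLevelCard Z f w (8 * #Z : ℕ) = T) :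
    ∑ w ∈ S, prob (fun ω ↦ (shiftedSymMat lam ω).mulVec w = u)
      ≤ choiceCount n p #Z r d (8 * #Z) * p ^ m * (1 / 2) ^ (n - 1) := by
  have : Nonempty (Fin n) := ⟨⟨0, hn⟩⟩
  have hpos : 0 < p := (Fact.out : p.Prime).pos
  set C := choiceCount n p #Z r d (8 * #Z)
  set M := 3 * p / (2 * min p (8 * T))
  have hM0 : 0 < M := Nat.div_pos (by omega) (by omega)
  have hcard : (#S : ℝ) ≤ C * M ^ n := by
    have hsub : S ⊆ ({w | T ≤ minLevelCard Z f w (8 * #Z : ℕ)} : Finset (Fin n → ZMod p)) :=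
      fun w hw ↦ (mem_filter_univ w).2 (hS w hw).2.ge
    have hcount := card_filter_le_minLevelCard_le h2 (8 * #Z) Z f hT hd
    rw [Fintype.card_fin] at hcount
    exact_mod_cast (card_le_card hsub).trans hcount
  have hrow : ∀ w ∈ S, prob (fun ω ↦ (shiftedSymMat lam ω).mulVec w = u)
      ≤ p ^ m * (1 / 2) ^ (n - 1) / M ^ n := fun w hw ↦ by
    rw [le_div_iff₀' (by positivity)]
    exact pow_mul_prob_mulVec_eq_le h2 hm hmn (by simpa using hp) lam u (hS w hw).1 (by omega)
      (hS w hw).2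
  calc ∑ w ∈ S, prob (fun ω ↦ (shiftedSymMat lam ω).mulVec w = u)
      ≤ #S * (p ^ m * (1 / 2) ^ (n - 1) / M ^ n) := by
        simpa only [nsmul_eq_mul] using sum_le_card_nsmul S _ _ hrow
    _ ≤ C * M ^ n * (p ^ m * (1 / 2) ^ (n - 1) / M ^ n) := by gcongr
    _ = C * p ^ m * (1 / 2) ^ (n - 1) := by field_simp

theorem prob_exists_isStructured_le_choiceCount (h2 : (2 : ZMod p) ≠ 0) (hn : 0 < n) {r m d : ℕ}
    [NeZero r] {Z : Finset (Fin n)} {f : Fin n → Fin r} (hm : ∀ j, #(block Z f j) ≤ m)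
    (hmn : m ≤ n) (hp : p ≤ Real.exp #Z) (hd : (p : ℝ) * (39 / 40) ^ d ≤ 1 / 5) (lam : ZMod p)
    (u : Fin n → ZMod p) :
    prob (fun ω ↦ ∃ w, IsStructured Z w ∧ (shiftedSymMat lam ω).mulVec w = u)
      ≤ (p + 1) * (choiceCount n p #Z r d (8 * #Z) * p ^ m * (1 / 2) ^ (n - 1)) := by
  classical
  let S : Finset (Fin n → ZMod p) := {w | IsStructured Z w}
  let T (w : Fin n → ZMod p) : ℕ := minLevelCard Z f w (8 * #Z : ℕ)
  have hT (w) (_ : w ∈ S) : T w ∈ range (p + 1) :=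
    mem_range_succ_iff.2 (minLevelCard_le Z f w _)
  calc prob (fun ω ↦ ∃ w, IsStructured Z w ∧ (shiftedSymMat lam ω).mulVec w = u)
      ≤ ∑ w ∈ S, prob (fun ω ↦ (shiftedSymMat lam ω).mulVec w = u) := by
        refine le_trans (prob_mono fun ω hω ↦ ?_) (prob_exists_le S _)
        simpa [S] using hω
    _ = ∑ k ∈ range (p + 1), ∑ w ∈ S with T w = k,
          prob (fun ω ↦ (shiftedSymMat lam ω).mulVec w = u) :=
        (sum_fiberwise_of_maps_to hT _).symm
    _ ≤ ∑ _k ∈ range (p + 1), choiceCount n p #Z r d (8 * #Z) * (p : ℝ) ^ m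
          * (1 / 2) ^ (n - 1) := by
        refine sum_le_sum fun k _ ↦ ?_
        rcases (S.filter (T · = k)).eq_empty_or_nonempty with hempty | ⟨w, hw⟩
        · rw [hempty, sum_empty]
          positivity
        · obtain ⟨hwS, rfl⟩ := mem_filter.1 hw
          refine sum_prob_mulVec_eq_le h2 hn hm hmn hp hd lam u
            (((mem_filter_univ w).1 hwS).two_le_minLevelCard f) fun v hv ↦ ?_
          obtain ⟨hvS, hvT⟩ := mem_filter.1 hv
          exact ⟨((mem_filter_univ v).1 hvS).1, hvT⟩
    _ = _ := by simp

theorem natCast_mul_pow_le_one_fifth {q l : ℕ} (hl : 1 ≤ l) (hql : q ≤ 2 ^ l) :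
    (q : ℝ) * (39 / 40) ^ (160 * l) ≤ 1 / 5 :=
  calc (q : ℝ) * (39 / 40) ^ (160 * l) ≤ 2 ^ l * (1 / 16) ^ l := by
        rw [pow_mul]
        gcongr
        · exact_mod_cast hql
        · norm_num
    _ = (1 / 8) ^ l := by rw [← mul_pow]; norm_num
    _ ≤ (1 / 8) ^ 1 := pow_le_pow_of_le_one (by norm_num) (by norm_num) hl
    _ ≤ 1 / 5 := by norm_num

theorem exponent_le {n l : ℕ} (hl : 1 ≤ l) (hn : 2 ^ 40 * l ^ 4 ≤ n) :
    (l + 1) + l * (160 * l * (8 * l))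
      + (l + l) * (4 * l + 8 * l * (160 * l * (400 * (256 * (8 * (4 * l))))))
      + l * (n / (8 * l) + 1) ≤ n - 1 - n / 2 := by
  have hdiv : n / (8 * l) * l ≤ n / 8 := by
    rw [Nat.le_div_iff_mul_le (by norm_num), mul_assoc, mul_comm l]
    exact Nat.div_mul_le_self _ _
  have h1 : l ≤ l ^ 4 := Nat.le_self_pow (by norm_num) l
  have h2 : l ^ 2 ≤ l ^ 4 := Nat.pow_le_pow_right hl (by norm_num)
  have h3 : l ^ 3 ≤ l ^ 4 := Nat.pow_le_pow_right hl (by norm_num)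
  ring_nf at hdiv ⊢
  omega

theorem prob_exists_isStructured_le (h2 : (2 : ZMod p) ≠ 0) {l : ℕ} (hl : 1 ≤ l) (hpl : p ≤ 2 ^ l)
    (hnl : n ≤ 2 ^ l) (hn : 2 ^ 40 * l ^ 4 ≤ n) {Z : Finset (Fin n)} (hZ : #Z = 4 * l)
    (lam : ZMod p) (u : Fin n → ZMod p) :
    prob (fun ω ↦ ∃ w, IsStructured Z w ∧ (shiftedSymMat lam ω).mulVec w = u)
      ≤ (1 / 2) ^ (n / 2) := by
  have : NeZero (8 * l) := ⟨by omega⟩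
  have hexp := exponent_le hl hn
  have hpR : (p : ℝ) ≤ 2 ^ l := mod_cast hpl
  have hnR : (n : ℝ) ≤ 2 ^ l := mod_cast hnl
  have hp1 : (p : ℝ) + 1 ≤ 2 ^ (l + 1) := by
    rw [pow_succ]
    linarith [one_le_pow₀ (M₀ := ℝ) one_le_two (n := l)]
  have hpexp : (p : ℝ) ≤ Real.exp #Z :=
    (hpR.trans (pow_le_pow_right₀ one_le_two (by omega))).trans (two_pow_le_exp _)
  have hl4 : l ≤ l ^ 4 := Nat.le_self_pow (by norm_num) l
  have hmn : n / (8 * l) + 1 ≤ n := by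
    have := Nat.div_le_self (n / 2) (4 * l)
    rw [Nat.div_div_eq_div_mul, show 2 * (4 * l) = 8 * l by ring] at this
    omega
  refine (prob_exists_isStructured_le_choiceCount h2 (by omega) (card_block_ofNat_le Z) hmn hpexp
    (natCast_mul_pow_le_one_fifth hl hpl) lam u).trans ?_
  rw [hZ, choiceCount]
  push_cast
  set E := 4 * l + 8 * l * (160 * l * (400 * (256 * (8 * (4 * l)))))
  calc ((p : ℝ) + 1) * ((p ^ (160 * l)) ^ (8 * l) * (n * p) ^ E * p ^ (n / (8 * l) + 1)
        * (1 / 2) ^ (n - 1))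
      ≤ 2 ^ (l + 1) * (((2 ^ l) ^ (160 * l)) ^ (8 * l) * (2 ^ l * 2 ^ l) ^ E
        * (2 ^ l) ^ (n / (8 * l) + 1) * (1 / 2) ^ (n - 1)) := by gcongr
    _ = 2 ^ ((l + 1) + l * (160 * l * (8 * l)) + (l + l) * E + l * (n / (8 * l) + 1))
        * (1 / 2) ^ (n - 1) := by
        rw [← mul_assoc]
        simp only [← pow_mul, ← pow_add]
        ring_nf
    _ ≤ 2 ^ (n - 1 - n / 2) * (1 / 2) ^ (n - 1 - n / 2 + n / 2) := by
        rw [show n - 1 - n / 2 + n / 2 = n - 1 by omega]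
        gcongr
        norm_num
    _ = (1 / 2) ^ (n / 2) := by
        rw [pow_add, ← mul_assoc, ← mul_pow]
        norm_num

end StructuredVectors

section GoodMatrices

variable {ι : Type*} [Fintype ι] [DecidableEq ι]

/-- The vectors supported on `Z` with coordinates in `{0, 2, -2}`: these are the differences of two
sign vectors on `Z`. -/
def signDiff {N : ℕ} (Z : Finset ι) : Finset (ι → ZMod N) :=
  Fintype.piFinset fun i ↦ if i ∈ Z then {0, 2, -2} else {0}

theorem zero_mem_signDiff {N : ℕ} (Z : Finset ι) : (0 : ι → ZMod N) ∈ signDiff Z := by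
  refine Fintype.mem_piFinset.2 fun i ↦ ?_
  split_ifs <;> simp

theorem card_signDiff_le {N : ℕ} (Z : Finset ι) : #(signDiff Z : Finset (ι → ZMod N)) ≤ 4 ^ #Z :=
  calc #(signDiff Z : Finset (ι → ZMod N)) ≤ ∏ i, if i ∈ Z then 4 else 1 := by
        rw [signDiff, Fintype.card_piFinset]
        refine prod_le_prod' fun i _ ↦ ?_
        split_ifs
        · exact card_le_three.trans (by norm_num)
        · simp
    _ = 4 ^ #Z := by rw [prod_ite_mem, univ_inter, prod_const]

variable {p : ℕ} [Fact p.Prime]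

/-- A matrix is good if it maps no structured vector to a multiple of a difference of sign vectors
on `Z`. -/
def IsGood (Z : Finset ι) (N : Matrix ι ι (ZMod p)) : Prop :=
  ∀ s : ZMod p, ∀ z ∈ signDiff Z, ∀ w, IsStructured Z w → N.mulVec w ≠ s • z

theorem IsGood.prod_absCos_lt {Z : Finset ι} {N : Matrix ι ι (ZMod p)} (hN : IsGood Z N)
    {s : ZMod p} {z w : ι → ZMod p} (hz : z ∈ signDiff Z) (hw : w ≠ 0) (h : N.mulVec w = s • z) :
    ∏ i ∈ Zᶜ, absCos (w i) < (1 / 2) ^ #Z := by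
  by_contra! hle
  exact hN s z hz w ⟨hw, hle⟩ h

theorem prob_not_isGood_le (h2 : (2 : ZMod p) ≠ 0) {n l : ℕ} (hl : 1 ≤ l) (hpl : p ≤ 2 ^ l)
    (hnl : n ≤ 2 ^ l) (hn : 2 ^ 40 * l ^ 4 ≤ n) {Z : Finset (Fin n)} (hZ : #Z = 4 * l)
    (lam : ZMod p) :
    prob (fun ω : Fin n → Fin n → Bool ↦ ¬ IsGood Z (shiftedSymMat lam ω))
      ≤ 2 ^ (9 * l) * (1 / 2) ^ (n / 2) := by
  let targets : Finset (ZMod p × (Fin n → ZMod p)) := univ ×ˢ signDiff Z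
  have hcard : #targets ≤ 2 ^ (9 * l) :=
    calc #targets = p * #(signDiff Z : Finset (Fin n → ZMod p)) := by
          rw [card_product, card_univ, ZMod.card]
      _ ≤ 2 ^ l * 4 ^ (4 * l) := by
          rw [← hZ]
          gcongr
          exact card_signDiff_le Z
      _ = 2 ^ (9 * l) := by
          rw [show 4 = 2 ^ 2 by rfl, ← pow_mul, ← pow_add]
          ring_nf
  calc prob (fun ω : Fin n → Fin n → Bool ↦ ¬ IsGood Z (shiftedSymMat lam ω))
      ≤ prob fun ω : Fin n → Fin n → Bool ↦ ∃ q ∈ targets,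
          ∃ w, IsStructured Z w ∧ (shiftedSymMat lam ω).mulVec w = q.1 • q.2 := by
        refine prob_mono fun ω hω ↦ ?_
        unfold IsGood at hω
        push Not at hω
        obtain ⟨s, z, hz, hw⟩ := hω
        exact ⟨(s, z), by simpa [targets] using hz, hw⟩
    _ ≤ ∑ _q ∈ targets, (1 / 2) ^ (n / 2) := (prob_exists_le _ _).trans <|
        sum_le_sum fun q _ ↦ prob_exists_isStructured_le h2 hl hpl hnl hn hZ lam (q.1 • q.2)
    _ ≤ 2 ^ (9 * l) * (1 / 2) ^ (n / 2) := by
        rw [sum_const, nsmul_eq_mul]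
        gcongr
        exact_mod_cast hcard

theorem IsGood.prob_signSum_eq_le_two_div {Z : Finset ι} {N : Matrix ι ι (ZMod p)} (hN : IsGood Z N)
    (hp : p ≤ 2 ^ #Z) {v : ι → ZMod p} (hv : v ≠ 0) (hNv : N.mulVec v = 0) (c : ZMod p) :
    prob (fun x : ι → Bool ↦ signSum univ v x = c) ≤ 2 / p := by
  have hp0 : (0 : ℝ) < p := Nat.cast_pos.2 (Fact.out : p.Prime).pos
  refine (prob_signSum_eq_le univ v c).trans ?_
  gcongr
  have hprod_le_one (s : Finset ι) (w : ι → ZMod p) : ∏ i ∈ s, absCos (w i) ≤ 1 :=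
    prod_le_one (fun _ _ ↦ absCos_nonneg _) fun _ _ ↦ absCos_le_one _
  have hterm (t : ZMod p) (ht : t ≠ 0) : ∏ i, absCos (t * v i) ≤ 1 / p := by
    have hgood := hN.prod_absCos_lt (s := 0) (zero_mem_signDiff Z) (smul_ne_zero ht hv)
      (by rw [Matrix.mulVec_smul, hNv, smul_zero, smul_zero])
    calc ∏ i, absCos (t * v i)
        = (∏ i ∈ Z, absCos (t * v i)) * ∏ i ∈ Zᶜ, absCos (t * v i) :=
          (prod_mul_prod_compl Z _).symm
      _ ≤ ∏ i ∈ Zᶜ, absCos (t * v i) :=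
          mul_le_of_le_one_left (prod_nonneg fun _ _ ↦ absCos_nonneg _) (hprod_le_one _ _)
      _ ≤ (1 / 2) ^ #Z := hgood.le
      _ ≤ 1 / p := by
          rw [div_pow, one_pow]
          gcongr
          exact_mod_cast hp
  calc ∑ t, ∏ i ∈ univ, absCos (t * v i)
      = ∏ i, absCos (0 * v i) + ∑ t ∈ univ.erase 0, ∏ i, absCos (t * v i) :=
        (add_sum_erase _ _ (mem_univ 0)).symm
    _ ≤ 1 + ∑ _t : ZMod p, (1 / p : ℝ) := by
        gcongr
        · exact hprod_le_one _ _
        · exact (sum_le_sum fun t ht ↦ hterm t (ne_of_mem_erase ht)).trans <|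
            sum_le_sum_of_subset_of_nonneg (erase_subset _ _) fun _ _ _ ↦ by positivity
    _ = 2 := by
        rw [sum_const, card_univ, ZMod.card, nsmul_eq_mul, mul_one_div_cancel hp0.ne']
        norm_num

end GoodMatrices

section Decoupling

open ZMod (stdAddChar)

variable {ι Ω Ω' κ : Type*}

theorem norm_expect_le_expect_norm [Fintype Ω] (f : Ω → ℂ) : ‖𝔼 ω, f ω‖ ≤ 𝔼 ω, ‖f ω‖ := by
  rw [Fintype.expect_eq_sum_div_card, Fintype.expect_eq_sum_div_card, norm_div,
    Complex.norm_natCast]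
  gcongr
  exact norm_sum_le _ _

theorem sq_norm_expect_expect_le [Fintype Ω] [Fintype Ω'] [Nonempty Ω] (f : Ω → Ω' → ℂ) :
    ‖𝔼 x, 𝔼 y, f x y‖ ^ 2 ≤ 𝔼 y, 𝔼 y', ‖𝔼 x, f x y * (starRingEnd ℂ) (f x y')‖ := by
  have hjensen : ‖𝔼 x, 𝔼 y, f x y‖ ^ 2 ≤ 𝔼 x, ‖𝔼 y, f x y‖ ^ 2 :=
    calc ‖𝔼 x, 𝔼 y, f x y‖ ^ 2 ≤ (𝔼 x, 1 * ‖𝔼 y, f x y‖) ^ 2 := by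
          gcongr
          simpa only [one_mul] using norm_expect_le_expect_norm fun x ↦ 𝔼 y, f x y
      _ ≤ (𝔼 _x : Ω, 1 ^ 2) * 𝔼 x, ‖𝔼 y, f x y‖ ^ 2 := expect_mul_sq_le_sq_mul_sq _ _ _
      _ = 𝔼 x, ‖𝔼 y, f x y‖ ^ 2 := by simp
  have hexpand : ((𝔼 x, ‖𝔼 y, f x y‖ ^ 2 : ℝ) : ℂ)
      = 𝔼 y, 𝔼 y', 𝔼 x, f x y * (starRingEnd ℂ) (f x y') := by
    have hpoint (x : Ω) : ((‖𝔼 y, f x y‖ ^ 2 : ℝ) : ℂ)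
        = 𝔼 y, 𝔼 y', f x y * (starRingEnd ℂ) (f x y') := by
      rw [Complex.ofReal_pow, ← Complex.mul_conj', map_expect, expect_mul_expect]
    rw [Complex.ofReal_expect, expect_congr rfl fun x _ ↦ hpoint x, expect_comm]
    exact expect_congr rfl fun y _ ↦ expect_comm _ _ _
  calc ‖𝔼 x, 𝔼 y, f x y‖ ^ 2 ≤ 𝔼 x, ‖𝔼 y, f x y‖ ^ 2 := hjensen
    _ = ‖𝔼 y, 𝔼 y', 𝔼 x, f x y * (starRingEnd ℂ) (f x y')‖ := by
        rw [← hexpand, Complex.norm_real,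
          Real.norm_of_nonneg (expect_nonneg fun _ _ ↦ by positivity)]
    _ ≤ 𝔼 y, 𝔼 y', ‖𝔼 x, f x y * (starRingEnd ℂ) (f x y')‖ :=
        (norm_expect_le_expect_norm _).trans <|
          expect_le_expect fun y _ ↦ norm_expect_le_expect_norm _

variable [Fintype ι]

/-- The vector of signs `±1` read off `x`. -/
def signVec (R : Type*) [Ring R] (x : ι → Bool) : ι → R := fun i ↦ signb R (x i)

/-- The value at the sign vector of `x` of the quadratic form of `A`. -/
def signQuadForm {R : Type*} [Ring R] (A : Matrix ι ι R) (x : ι → Bool) : R :=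
  signVec R x ⬝ᵥ A.mulVec (signVec R x)

theorem dotProduct_mulVec_comm_of_isSymm {R : Type*} [CommRing R] {A : Matrix ι ι R}
    (hA : A.IsSymm) (a b : ι → R) : a ⬝ᵥ A.mulVec b = b ⬝ᵥ A.mulVec a := by
  rw [Matrix.dotProduct_mulVec, ← Matrix.mulVec_transpose, hA, dotProduct_comm]

theorem add_dotProduct_mulVec_sub {R : Type*} [CommRing R] {A : Matrix ι ι R} (hA : A.IsSymm)
    (a b c : ι → R) :
    (a + b) ⬝ᵥ A.mulVec (a + b) - (a + c) ⬝ᵥ A.mulVec (a + c)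
      = a ⬝ᵥ ((2 : R) • A.mulVec (b - c)) + (b ⬝ᵥ A.mulVec b - c ⬝ᵥ A.mulVec c) := by
  simp only [Matrix.mulVec_add, Matrix.mulVec_sub, dotProduct_add, add_dotProduct, dotProduct_smul,
    dotProduct_sub, smul_eq_mul]
  rw [dotProduct_mulVec_comm_of_isSymm hA b a, dotProduct_mulVec_comm_of_isSymm hA c a]
  ring

variable [DecidableEq ι]

theorem expect_expect_piecewise [Fintype κ] {M : Type*} [AddCommMonoid M] [Module ℚ≥0 M]
    (Z : Finset ι) (f : (ι → κ) → M) : 𝔼 x, 𝔼 y, f (Z.piecewise y x) = 𝔼 x, f x := by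
  let swap (q : (ι → κ) × (ι → κ)) := (Z.piecewise q.2 q.1, Z.piecewise q.1 q.2)
  have hswap : swap.Involutive := fun q ↦ by
    ext i <;> by_cases hi : i ∈ Z <;> simp [swap, hi]
  exact expect_expect_perm_fst hswap.toPerm f

/-- The vector of signs read off `x` on `J`, extended by `0`. -/
def signVecOn (R : Type*) [Ring R] (J : Finset ι) (x : ι → Bool) : ι → R :=
  fun i ↦ if i ∈ J then signb R (x i) else 0

theorem signVec_piecewise {R : Type*} [Ring R] (Z : Finset ι) (x y : ι → Bool) :
    signVec R (Z.piecewise y x) = signVecOn R Zᶜ x + signVecOn R Z y := by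
  ext i
  by_cases hi : i ∈ Z <;> simp [signVec, signVecOn, hi]

theorem signVecOn_dotProduct {R : Type*} [Ring R] (J : Finset ι) (w : ι → R) (x : ι → Bool) :
    signVecOn R J x ⬝ᵥ w = signSum J w x := by
  simp only [dotProduct, signVecOn, signSum, ite_mul, zero_mul, sum_ite_mem, univ_inter]

theorem signVecOn_sub_mem_signDiff {N : ℕ} (Z : Finset ι) (x y : ι → Bool) :
    signVecOn (ZMod N) Z x - signVecOn (ZMod N) Z y ∈ signDiff Z := by
  refine Fintype.mem_piFinset.2 fun i ↦ ?_
  by_cases hi : i ∈ Z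
  · cases hx : x i <;> cases hy : y i <;> simp [signVecOn, signb, hi, hx, hy] <;> norm_num
  · simp [signVecOn, hi]

theorem prob_signVecOn_eq_le {R : Type*} [Ring R] (h2 : (2 : R) ≠ 0) (Z : Finset ι)
    (x : ι → Bool) : prob (fun y ↦ signVecOn R Z x = signVecOn R Z y) ≤ (1 / 2) ^ #Z := by
  have hne : (1 : R) ≠ -1 := fun h ↦
    h2 (one_add_one_eq_two.symm.trans (eq_neg_iff_add_eq_zero.1 h))
  have hcoord (i : ι) : prob (fun b ↦ signb R (x i) = signb R b) ≤ 1 / 2 := by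
    classical
    rw [prob_eq_expect, Fintype.expect_eq_sum_div_card, Fintype.sum_bool, Fintype.card_bool]
    cases x i <;> simp [signb, hne, hne.symm]
  refine (prob_mono fun y hy i hi ↦ ?_).trans (prob_forall_mem_le fun i _ ↦ hcoord i)
  simpa [signVecOn, hi] using congrFun hy i

variable {p : ℕ} [Fact p.Prime] {Z : Finset ι} {N A : Matrix ι ι (ZMod p)}

/-- After Cauchy–Schwarz in the signs outside `Z`, the quadratic terms in those signs cancel, and
what remains is the linear form with coefficient vector `2 t A (y - y')`, whose image under `N` is
`2 t (y - y')`. -/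
theorem IsGood.norm_expect_quadForm_mul_conj_le (h2 : (2 : ZMod p) ≠ 0) (hN : IsGood Z N)
    (hA : A.IsSymm) (hNA : N * A = 1) {t : ZMod p} (ht : t ≠ 0) {y y' : ι → Bool}
    (hy : signVecOn (ZMod p) Z y ≠ signVecOn (ZMod p) Z y') :
    ‖𝔼 x : ι → Bool,
        (stdAddChar (t * signQuadForm A (Z.piecewise y x))
          * (starRingEnd ℂ) (stdAddChar (t * signQuadForm A (Z.piecewise y' x))) : ℂ)‖
      ≤ (1 / 2) ^ #Z := by
  set b := signVecOn (ZMod p) Z y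
  set c := signVecOn (ZMod p) Z y'
  set w := t • (2 : ZMod p) • A.mulVec (b - c) with hw
  have hNw : N.mulVec w = (t * 2) • (b - c) := by
    rw [hw, Matrix.mulVec_smul, Matrix.mulVec_smul, Matrix.mulVec_mulVec, hNA, Matrix.one_mulVec,
      smul_smul]
  have hw0 : w ≠ 0 := by
    intro h
    rw [h, Matrix.mulVec_zero] at hNw
    exact smul_ne_zero (mul_ne_zero ht h2) (sub_ne_zero.2 hy) hNw.symm
  have hterm (x : ι → Bool) :
      (stdAddChar (t * signQuadForm A (Z.piecewise y x))
          * (starRingEnd ℂ) (stdAddChar (t * signQuadForm A (Z.piecewise y' x))) : ℂ)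
        = stdAddChar (t * (b ⬝ᵥ A.mulVec b - c ⬝ᵥ A.mulVec c)) * stdAddChar (signSum Zᶜ w x) := by
    rw [← stdAddChar_neg_eq_conj, ← AddChar.map_add_eq_mul, ← AddChar.map_add_eq_mul,
      ← sub_eq_add_neg, ← mul_sub, signQuadForm, signQuadForm, signVec_piecewise,
      signVec_piecewise, add_dotProduct_mulVec_sub hA, ← signVecOn_dotProduct, hw, dotProduct_smul,
      dotProduct_smul, dotProduct_smul, smul_eq_mul, smul_eq_mul, mul_add, add_comm]
  rw [expect_congr rfl fun x _ ↦ hterm x, ← mul_expect, norm_mul, AddChar.norm_apply, one_mul,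
    norm_expect_stdAddChar_signSum]
  exact (hN.prod_absCos_lt (signVecOn_sub_mem_signDiff Z y y') hw0 hNw).le

theorem IsGood.sq_norm_expect_quadForm_le (h2 : (2 : ZMod p) ≠ 0) (hN : IsGood Z N)
    (hA : A.IsSymm) (hNA : N * A = 1) {t : ZMod p} (ht : t ≠ 0) :
    ‖𝔼 x : ι → Bool, (stdAddChar (t * signQuadForm A x) : ℂ)‖ ^ 2
      ≤ 2 * (1 / 2) ^ #Z := by
  rw [← expect_expect_piecewise Z]
  refine (sq_norm_expect_expect_le _).trans <| expect_le univ_nonempty fun y _ ↦ ?_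
  calc _ ≤ 𝔼 y' : ι → Bool, ((if signVecOn (ZMod p) Z y = signVecOn (ZMod p) Z y' then 1 else 0)
          + (1 / 2 : ℝ) ^ #Z) := by
        refine expect_le_expect fun y' _ ↦ ?_
        split_ifs with hy
        · refine (norm_expect_le_expect_norm _).trans ?_
          simp [AddChar.norm_apply]
        · rw [zero_add]
          exact hN.norm_expect_quadForm_mul_conj_le h2 hA hNA ht hy
    _ ≤ (1 / 2) ^ #Z + (1 / 2) ^ #Z := by
        rw [expect_add_distrib, Fintype.expect_const, ← prob_eq_expect]
        gcongr
        exact prob_signVecOn_eq_le h2 Z y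
    _ = 2 * (1 / 2) ^ #Z := (two_mul _).symm

theorem IsGood.abs_prob_quadForm_eq_sub_le (h2 : (2 : ZMod p) ≠ 0) (hN : IsGood Z N)
    (hp : p ^ 4 ≤ 2 ^ #Z) (hA : A.IsSymm) (hNA : N * A = 1) (c : ZMod p) :
    |prob (fun x : ι → Bool ↦ signQuadForm A x = c) - 1 / p| ≤ 2 / p ^ 2 := by
  have hp0 : (0 : ℝ) < p := Nat.cast_pos.2 (Fact.out : p.Prime).pos
  refine abs_prob_eq_sub_le _ c (by positivity) fun t ht ↦
    le_of_sq_le_sq ((hN.sq_norm_expect_quadForm_le h2 hA hNA ht).trans ?_) (by positivity)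
  calc 2 * (1 / 2 : ℝ) ^ #Z = 2 / 2 ^ #Z := by rw [div_pow, one_pow, mul_one_div]
    _ ≤ 4 / p ^ 4 := by
        gcongr
        · norm_num
        · exact_mod_cast hp
    _ = (2 / p ^ 2) ^ 2 := by ring

end Decoupling

section Bordering

variable {ι K : Type*} [Fintype ι] [Field K]

/-- The dimension of the kernel of a square matrix. -/
def corank (N : Matrix ι ι K) : ℕ := Module.finrank K (LinearMap.ker N.mulVecLin)

theorem rank_add_corank (N : Matrix ι ι K) : N.rank + corank N = Fintype.card ι := by
  rw [Matrix.rank, corank, LinearMap.finrank_range_add_finrank_ker,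
    Module.finrank_fintype_fun_eq_card]

theorem corank_pos_iff [DecidableEq ι] {N : Matrix ι ι K} : 1 ≤ corank N ↔ N.det = 0 := by
  rw [← Matrix.exists_mulVec_eq_zero_iff, Nat.one_le_iff_ne_zero, corank, Ne,
    Submodule.finrank_eq_zero, ← Ne, Submodule.ne_bot_iff]
  simp only [LinearMap.mem_ker, Matrix.mulVecLin_apply, and_comm]

variable {n : ℕ}

/-- The symmetric bordering of `N` by a new first row and column, with corner entry `a` and
remaining entries `y`. -/
def bordered {R : Type*} (N : Matrix (Fin n) (Fin n) R) (a : R) (y : Fin n → R) :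
    Matrix (Fin (n + 1)) (Fin (n + 1)) R :=
  Matrix.of (Fin.cons (Fin.cons a y) fun i ↦ Fin.cons (y i) (N i))

variable {N : Matrix (Fin n) (Fin n) K} {a : K} {y : Fin n → K}

theorem bordered_mulVec_eq_zero_iff {v : Fin (n + 1) → K} :
    (bordered N a y).mulVec v = 0
      ↔ a * v 0 + y ⬝ᵥ Fin.tail v = 0 ∧ v 0 • y + N.mulVec (Fin.tail v) = 0 := by
  simp only [funext_iff, Fin.forall_fin_succ, Matrix.mulVec, dotProduct, Fin.sum_univ_succ,
    bordered, Matrix.of_apply, Fin.cons_zero, Fin.cons_succ, Fin.tail, Pi.zero_apply, Pi.add_apply,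
    Pi.smul_apply, smul_eq_mul, mul_comm]

theorem corank_bordered_le_succ : corank (bordered N a y) ≤ corank N + 1 := by
  have hrank : N.rank ≤ (bordered N a y).rank := by
    have hsub : N = (bordered N a y).submatrix Fin.succ Fin.succ := by
      ext i j
      simp [bordered]
    conv_lhs => rw [hsub]
    exact Matrix.rank_submatrix_le _ _ _
  have hN := rank_add_corank N
  have hbordered := rank_add_corank (bordered N a y)
  rw [Fintype.card_fin] at hN hbordered
  omega

/-- Pairing the kernel equations with `u` forces the first coordinate of a kernel vector to vanish;
the remaining coordinates then lie in the kernel of `N` and are orthogonal to `y`. -/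
theorem corank_bordered_lt (hN : N.IsSymm) {u : Fin n → K} (hu : N.mulVec u = 0)
    (hy : y ⬝ᵥ u ≠ 0) : corank (bordered N a y) < corank N := by
  let kerN := LinearMap.ker N.mulVecLin
  let orthY := LinearMap.ker (dotProductBilin K K y)
  let consZero : (Fin n → K) →ₗ[K] (Fin (n + 1) → K) := LinearMap.vecCons 0 LinearMap.id
  have hker : LinearMap.ker (bordered N a y).mulVecLin ≤ (kerN ⊓ orthY).map consZero := by
    intro v hv
    obtain ⟨hcorner, hrows⟩ := bordered_mulVec_eq_zero_iff.1 hv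
    have hv0 : v 0 = 0 := by
      have hpair := congrArg (· ⬝ᵥ u) hrows
      simp only [add_dotProduct, smul_dotProduct, zero_dotProduct] at hpair
      rw [dotProduct_comm, dotProduct_comm (N.mulVec _), Matrix.dotProduct_mulVec,
        ← Matrix.mulVec_transpose, hN.eq, hu, zero_dotProduct, add_zero, smul_eq_mul,
        dotProduct_comm] at hpair
      exact (mul_eq_zero.1 hpair).resolve_right hy
    rw [hv0, mul_zero, zero_add] at hcorner
    rw [hv0, zero_smul, zero_add] at hrows
    exact ⟨Fin.tail v, ⟨hrows, hcorner⟩, by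
      rw [← Fin.cons_self_tail v, hv0]; rfl⟩
  have hlt : kerN ⊓ orthY < kerN :=
    lt_of_le_of_ne inf_le_left fun h ↦ hy (inf_eq_left.1 h hu)
  exact ((Submodule.finrank_mono hker).trans (Submodule.finrank_map_le _ _)).trans_lt
    (Submodule.finrank_lt_finrank_of_lt hlt)

theorem corank_bordered_pos_iff (hN : IsUnit N.det) :
    1 ≤ corank (bordered N a y) ↔ y ⬝ᵥ N⁻¹.mulVec y = a := by
  rw [corank_pos_iff, ← Matrix.exists_mulVec_eq_zero_iff]
  constructor
  · rintro ⟨v, hv, hker⟩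
    obtain ⟨hcorner, hrows⟩ := bordered_mulVec_eq_zero_iff.1 hker
    have htail : Fin.tail v = -(v 0 • N⁻¹.mulVec y) := by
      have hinv := congrArg N⁻¹.mulVec hrows
      rw [Matrix.mulVec_add, Matrix.mulVec_mulVec, Matrix.nonsing_inv_mul _ hN, Matrix.one_mulVec,
        Matrix.mulVec_smul, Matrix.mulVec_zero] at hinv
      exact eq_neg_of_add_eq_zero_right hinv
    have hv0 : v 0 ≠ 0 := by
      intro h0
      rw [h0, zero_smul, neg_zero] at htail
      exact hv <| by
        rw [← Fin.cons_self_tail v, h0, htail]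
        exact Matrix.cons_zero_zero
    rw [htail, dotProduct_neg, dotProduct_smul, smul_eq_mul] at hcorner
    exact mul_left_cancel₀ hv0 (by linear_combination -hcorner)
  · intro h
    refine ⟨Fin.cons 1 (-N⁻¹.mulVec y), fun h0 ↦ one_ne_zero (congrFun h0 0), ?_⟩
    rw [bordered_mulVec_eq_zero_iff, Fin.cons_zero, Fin.tail_cons, dotProduct_neg, h,
      Matrix.mulVec_neg, Matrix.mulVec_mulVec, Matrix.mul_nonsing_inv _ hN, Matrix.one_mulVec]
    simp

theorem shiftedSymMat_succ {R : Type*} [Ring R] (lam : R) (ω : Fin (n + 1) → Fin (n + 1) → Bool) :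
    shiftedSymMat lam ω = bordered (shiftedSymMat lam fun i j ↦ ω i.succ j.succ)
      (signb R (ω 0 0) - lam) (signVec R fun j ↦ ω 0 j.succ) := by
  have hmin (i j : Fin n) : min i.succ j.succ = (min i j).succ :=
    Fin.strictMono_succ.monotone.map_min.symm
  have hmax (i j : Fin n) : max i.succ j.succ = (max i j).succ :=
    Fin.strictMono_succ.monotone.map_max.symm
  ext i j
  cases i using Fin.cases <;> cases j using Fin.cases <;>
    simp [shiftedSymMat, symMat, bordered, signVec, Matrix.one_apply, hmin, hmax,
      Fin.succ_ne_zero, (Fin.succ_ne_zero _).symm]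

/-- Splits off the first row and the first column of a square array. -/
def arraySuccEquiv (n : ℕ) (κ : Type*) : (Fin (n + 1) → Fin (n + 1) → κ) ≃
    (Fin n → Fin n → κ) × (κ × (Fin n → κ)) × (Fin n → κ) where
  toFun ω := (fun i j ↦ ω i.succ j.succ, (ω 0 0, fun j ↦ ω 0 j.succ), fun i ↦ ω i.succ 0)
  invFun q := Fin.cons (Fin.cons q.2.1.1 q.2.1.2) fun i ↦ Fin.cons (q.2.2 i) (q.1 i)
  left_inv ω := by
    funext i j
    cases i using Fin.cases <;> cases j using Fin.cases <;> simp
  right_inv q := by simp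

theorem expect_arraySucc {κ M : Type*} [Fintype κ] [Nonempty κ] [AddCommMonoid M] [Module ℚ≥0 M]
    (f : (Fin n → Fin n → κ) → κ → (Fin n → κ) → M) :
    𝔼 ω : Fin (n + 1) → Fin (n + 1) → κ,
        f (fun i j ↦ ω i.succ j.succ) (ω 0 0) (fun j ↦ ω 0 j.succ)
      = 𝔼 ω, 𝔼 b, 𝔼 x, f ω b x := by
  refine (Fintype.expect_equiv (arraySuccEquiv n κ) _
    (fun q ↦ f q.1 q.2.1.1 q.2.1.2) fun ω ↦ rfl).trans ?_
  simp only [← univ_product_univ, expect_product, expect_const univ_nonempty]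

theorem prob_shiftedSymMat_succ {R : Type*} [Ring R] (lam : R)
    (E : Matrix (Fin (n + 1)) (Fin (n + 1)) R → Prop) :
    prob (fun ω ↦ E (shiftedSymMat lam ω)) = 𝔼 ω : Fin n → Fin n → Bool, 𝔼 b : Bool,
      prob fun x ↦ E (bordered (shiftedSymMat lam ω) (signb R b - lam) (signVec R x)) := by
  classical
  simp only [prob_eq_expect, shiftedSymMat_succ]
  exact expect_arraySucc fun ω b x ↦
    if E (bordered (shiftedSymMat lam ω) (signb R b - lam) (signVec R x)) then (1 : ℝ) else 0

end Bordering

section CorankRecursion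

variable {p : ℕ} [Fact p.Prime] {n : ℕ} {Z : Finset (Fin n)} {N : Matrix (Fin n) (Fin n) (ZMod p)}

theorem IsGood.prob_corank_le_corank_bordered_le (hN : IsGood Z N) (hp : p ≤ 2 ^ #Z)
    (hsymm : N.IsSymm) (hc : 1 ≤ corank N) (a : ZMod p) :
    prob (fun x ↦ corank N ≤ corank (bordered N a (signVec (ZMod p) x))) ≤ 2 / p := by
  obtain ⟨v, hv, hNv⟩ := Matrix.exists_mulVec_eq_zero_iff.2 (corank_pos_iff.1 hc)
  refine (prob_mono fun x hx ↦ ?_).trans (hN.prob_signSum_eq_le_two_div hp hv hNv 0)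
  by_contra h
  exact (corank_bordered_lt hsymm hNv h).not_ge hx

theorem IsGood.abs_prob_corank_bordered_pos_sub_le (h2 : (2 : ZMod p) ≠ 0) (hN : IsGood Z N)
    (hp : p ^ 4 ≤ 2 ^ #Z) (hsymm : N.IsSymm) (hc : corank N = 0) (a : ZMod p) :
    |prob (fun x ↦ 1 ≤ corank (bordered N a (signVec (ZMod p) x))) - 1 / p| ≤ 2 / p ^ 2 := by
  have hdet : IsUnit N.det := by
    refine Ne.isUnit fun h ↦ ?_
    have := corank_pos_iff.2 h
    omega
  rw [prob_congr fun x ↦ corank_bordered_pos_iff hdet]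
  exact hN.abs_prob_quadForm_eq_sub_le h2 hp hsymm.inv (Matrix.mul_nonsing_inv _ hdet) a

open Classical in
theorem prob_succ_le_corank_bordered_le (h2 : (2 : ZMod p) ≠ 0) (hp : p ^ 4 ≤ 2 ^ #Z)
    (hsymm : N.IsSymm) (a : ZMod p) (j : ℕ) :
    prob (fun x ↦ j + 1 ≤ corank (bordered N a (signVec (ZMod p) x)))
      ≤ (if ¬ IsGood Z N then 1 else 0) + 2 / p * (if j ≤ corank N then 1 else 0)
        + (if j + 2 ≤ corank N then 1 else 0) := by
  have hp2 : (2 : ℝ) ≤ p := by exact_mod_cast (Fact.out : p.Prime).two_le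
  have hone := prob_le_one fun x ↦ j + 1 ≤ corank (bordered N a (signVec (ZMod p) x))
  have hdiv : (0 : ℝ) ≤ 2 / p := by positivity
  by_cases hN : IsGood Z N
  swap
  · rw [if_pos hN]
    split_ifs <;> linarith
  by_cases hbig : j + 2 ≤ corank N
  · rw [if_pos hbig, if_neg (not_not.2 hN)]
    split_ifs <;> linarith
  rw [if_neg (not_not.2 hN), if_neg hbig, zero_add, add_zero]
  by_cases hj : j ≤ corank N
  · rw [if_pos hj, mul_one]
    rcases Nat.eq_zero_or_pos (corank N) with h0 | hpos
    · obtain rfl : j = 0 := by omega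
      have hclose := (abs_le.1 (hN.abs_prob_corank_bordered_pos_sub_le h2 hp hsymm h0 a)).2
      have hsq : (2 : ℝ) / p ^ 2 ≤ 1 / p := by
        rw [div_le_div_iff₀ (by positivity) (by positivity)]
        nlinarith
      calc _ ≤ 1 / (p : ℝ) + 1 / p := by linarith
        _ = 2 / p := by ring
    · refine (prob_mono fun x hx ↦ ?_).trans <| hN.prob_corank_le_corank_bordered_le
        ((Nat.le_self_pow four_ne_zero p).trans hp) hsymm hpos a
      omega
  · rw [if_neg hj, mul_zero, prob_eq_expect]
    refine (expect_eq_zero fun x _ ↦ if_neg fun hx ↦ hj ?_).le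
    exact Nat.le_of_succ_le_succ (hx.trans corank_bordered_le_succ)

open Classical in
theorem abs_prob_corank_bordered_pos_sub_le (h2 : (2 : ZMod p) ≠ 0) (hp : p ^ 4 ≤ 2 ^ #Z)
    (hsymm : N.IsSymm) (a : ZMod p) :
    |prob (fun x ↦ 1 ≤ corank (bordered N a (signVec (ZMod p) x))) - 1 / p|
      ≤ (if ¬ IsGood Z N then 1 else 0) + 2 / p * (if 1 ≤ corank N then 1 else 0)
        + (if 2 ≤ corank N then 1 else 0) + 2 / p ^ 2 := by
  have hnonneg := prob_nonneg fun x ↦ 1 ≤ corank (bordered N a (signVec (ZMod p) x))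
  have hone := prob_le_one fun x ↦ 1 ≤ corank (bordered N a (signVec (ZMod p) x))
  have hinv : (1 : ℝ) / p ≤ 1 := by
    rw [one_div]
    exact Nat.cast_inv_le_one p
  have hinv0 : (0 : ℝ) ≤ 1 / p := by positivity
  have hsq : (0 : ℝ) ≤ 2 / p ^ 2 := by positivity
  have htwo : (2 : ℝ) / p = 1 / p + 1 / p := by ring
  rcases Nat.eq_zero_or_pos (corank N) with h0 | hpos
  · by_cases hN : IsGood Z N
    · simpa [hN, h0] using hN.abs_prob_corank_bordered_pos_sub_le h2 hp hsymm h0 a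
    · simp only [hN, h0, not_false_eq_true, if_true, one_ne_zero, nonpos_iff_eq_zero,
        OfNat.ofNat_ne_zero, if_false, mul_zero, add_zero]
      exact abs_le.2 ⟨by linarith, by linarith⟩
  · have hle := prob_succ_le_corank_bordered_le h2 hp hsymm a 0
    rw [zero_add, if_pos (Nat.zero_le _), zero_add] at hle
    rw [if_pos (Nat.one_le_iff_ne_zero.2 hpos.ne'), abs_le]
    constructor
    · split_ifs <;> linarith
    · linarith

/-- The probability that the shifted random symmetric matrix of size `n` has corank at least
`j`. -/
def corankTail (lam : ZMod p) (n j : ℕ) : ℝ :=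
  prob fun ω : Fin n → Fin n → Bool ↦ j ≤ corank (shiftedSymMat lam ω)

theorem corankTail_nonneg (lam : ZMod p) (n j : ℕ) : 0 ≤ corankTail lam n j := prob_nonneg _

theorem corankTail_le_one (lam : ZMod p) (n j : ℕ) : corankTail lam n j ≤ 1 := prob_le_one _

theorem corankTail_eq_zero (lam : ZMod p) {j : ℕ} (hj : n < j) : corankTail lam n j = 0 := by
  rw [corankTail, prob_eq_expect]
  refine expect_eq_zero fun ω _ ↦ if_neg fun hω ↦ hj.not_ge (hω.trans ?_)
  have h := rank_add_corank (shiftedSymMat lam ω)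
  rw [Fintype.card_fin] at h
  omega

theorem corankTail_succ_le (h2 : (2 : ZMod p) ≠ 0) (hp : p ^ 4 ≤ 2 ^ #Z) (lam : ZMod p) (j : ℕ) :
    corankTail lam (n + 1) (j + 1)
      ≤ prob (fun ω ↦ ¬ IsGood Z (shiftedSymMat lam ω)) + 2 / p * corankTail lam n j
        + corankTail lam n (j + 2) := by
  classical
  simp only [corankTail, prob_shiftedSymMat_succ lam fun M ↦ j + 1 ≤ corank M]
  refine (expect_le_expect fun ω _ ↦ expect_le univ_nonempty fun b _ ↦
    prob_succ_le_corank_bordered_le h2 hp (shiftedSymMat_isSymm lam ω) (signb _ b - lam) j).trans ?_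
  simp only [prob_eq_expect, expect_add_distrib, mul_expect, le_refl]

theorem abs_corankTail_succ_one_sub_le (h2 : (2 : ZMod p) ≠ 0) (hp : p ^ 4 ≤ 2 ^ #Z)
    (lam : ZMod p) :
    |corankTail lam (n + 1) 1 - 1 / p|
      ≤ prob (fun ω ↦ ¬ IsGood Z (shiftedSymMat lam ω)) + 2 / p * corankTail lam n 1
        + corankTail lam n 2 + 2 / p ^ 2 := by
  classical
  have hsub : corankTail lam (n + 1) 1 - 1 / p = 𝔼 ω : Fin n → Fin n → Bool, 𝔼 b : Bool,
      (prob (fun x ↦ 1 ≤ corank (bordered (shiftedSymMat lam ω) (signb _ b - lam) (signVec _ x)))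
        - 1 / p) := by
    simp only [corankTail, prob_shiftedSymMat_succ lam fun M ↦ 1 ≤ corank M, expect_sub_distrib,
      expect_const univ_nonempty]
  rw [hsub]
  refine (abs_expect_le _ _).trans <| (expect_le_expect fun ω _ ↦ (abs_expect_le _ _).trans <|
    expect_le univ_nonempty fun b _ ↦ abs_prob_corank_bordered_pos_sub_le h2 hp
      (shiftedSymMat_isSymm lam ω) (signb _ b - lam)).trans ?_
  simp only [corankTail, prob_eq_expect, expect_add_distrib, mul_expect,
    expect_const univ_nonempty, le_refl]

/-- A supersolution of the recursion satisfied by `corankTail`, with `x = 1 / p` and with `β`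
bounding the probability of not being good. Its terms are a stationary solution for `β = 0`, a
decaying solution dominating the trivial bound at time `0`, and a solution absorbing `β`. -/
def corankMajorant (n₀ : ℕ) (x β : ℝ) (i j : ℕ) : ℝ :=
  (4 * x) ^ j + 4 ^ n₀ * (1 / 2) ^ i * (1 / 4) ^ j + 128 * β * (65 / 64) ^ i

theorem corankMajorant_step {n₀ : ℕ} {x β : ℝ} (hx0 : 0 ≤ x) (hx : x ≤ 1 / 256) (hβ : 0 ≤ β)
    (i j : ℕ) :
    β + 2 * x * corankMajorant n₀ x β i j + corankMajorant n₀ x β i (j + 2)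
      ≤ corankMajorant n₀ x β (i + 1) (j + 1) := by
  have hstat : 2 * x * (4 * x) ^ j + (4 * x) ^ (j + 2) ≤ (4 * x) ^ (j + 1) := by
    calc _ = (4 * x) ^ j * x * (2 + 16 * x) := by ring
      _ ≤ (4 * x) ^ j * x * 4 := by gcongr; linarith
      _ = (4 * x) ^ (j + 1) := by ring
  have hdecay : 2 * x * (4 ^ n₀ * (1 / 2) ^ i * (1 / 4) ^ j)
      + 4 ^ n₀ * (1 / 2) ^ i * (1 / 4) ^ (j + 2)
        ≤ 4 ^ n₀ * (1 / 2) ^ (i + 1) * (1 / 4) ^ (j + 1) := by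
    calc _ = 4 ^ n₀ * (1 / 2) ^ i * (1 / 4) ^ j * (2 * x + 1 / 16) := by ring
      _ ≤ 4 ^ n₀ * (1 / 2) ^ i * (1 / 4) ^ j * (1 / 8) := by gcongr; linarith
      _ = 4 ^ n₀ * (1 / 2) ^ (i + 1) * (1 / 4) ^ (j + 1) := by ring
  have habsorb : β + 2 * x * (128 * β * (65 / 64) ^ i) + 128 * β * (65 / 64) ^ i
      ≤ 128 * β * (65 / 64) ^ (i + 1) := by
    have : β ≤ β * (65 / 64) ^ i := le_mul_of_one_le_right hβ (one_le_pow₀ (by norm_num))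
    rw [pow_succ]
    nlinarith
  unfold corankMajorant
  linarith

theorem one_le_corankMajorant_zero {n₀ j : ℕ} {x β : ℝ} (hx0 : 0 ≤ x) (hβ : 0 ≤ β) (hj : j ≤ n₀) :
    1 ≤ corankMajorant n₀ x β 0 j := by
  have hdecay : (1 : ℝ) ≤ 4 ^ n₀ * (1 / 2) ^ 0 * (1 / 4) ^ j := by
    obtain ⟨k, rfl⟩ := Nat.exists_eq_add_of_le' hj
    rw [pow_zero, mul_one, pow_add, mul_assoc, ← mul_pow, mul_one_div_cancel four_ne_zero,
      one_pow, mul_one]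
    exact one_le_pow₀ (by norm_num)
  have : 0 ≤ (4 * x) ^ j + 128 * β * (65 / 64) ^ 0 := by positivity
  unfold corankMajorant
  linarith

theorem le_corankMajorant {q : ℕ → ℕ → ℝ} {x β : ℝ} {I n₀ : ℕ} (hx0 : 0 ≤ x)
    (hx : x ≤ 1 / 256) (hβ : 0 ≤ β) (hq1 : ∀ i j, q i j ≤ 1) (hq0 : ∀ j, n₀ < j → q 0 j ≤ 0)
    (hstep : ∀ i < I, ∀ j, q (i + 1) (j + 1) ≤ β + 2 * x * q i j + q i (j + 2)) :
    ∀ i ≤ I, ∀ j, q i j ≤ corankMajorant n₀ x β i j := by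
  intro i
  induction i with
  | zero =>
    intro _ j
    rcases le_or_gt j n₀ with hj | hj
    · exact (hq1 0 j).trans (one_le_corankMajorant_zero hx0 hβ hj)
    · exact (hq0 j hj).trans (by unfold corankMajorant; positivity)
  | succ i ih =>
    rintro hi (_ | j)
    · refine (hq1 _ _).trans ?_
      rw [corankMajorant, pow_zero, add_assoc]
      exact le_add_of_nonneg_right (by positivity)
    · refine (hstep i hi j).trans <| le_trans ?_ (corankMajorant_step hx0 hx hβ i j)
      gcongr <;> exact ih (Nat.le_of_succ_le hi) _

theorem exists_finset_card_eq {m : ℕ} (h : m ≤ n) : ∃ Z : Finset (Fin n), #Z = m := by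
  obtain ⟨Z, -, hZ⟩ := exists_subset_card_eq (s := (univ : Finset (Fin n))) (n := m) (by simpa)
  exact ⟨Z, hZ⟩

theorem two_pow_mul_half_pow_le {a b l : ℕ} (hpl : p ≤ 2 ^ l) (h : a + 2 * l ≤ b) :
    (2 : ℝ) ^ a * (1 / 2) ^ b ≤ 1 / p ^ 2 := by
  have hp0 : (0 : ℝ) < p := Nat.cast_pos.2 (Fact.out : p.Prime).pos
  calc (2 : ℝ) ^ a * (1 / 2) ^ b ≤ 2 ^ a * (1 / 2) ^ (a + 2 * l) := by
        gcongr ?_ * ?_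
        exact pow_le_pow_of_le_one (by norm_num) (by norm_num) h
    _ = 1 / (2 ^ l) ^ 2 := by
        rw [pow_add, ← mul_assoc, ← mul_pow, mul_one_div_cancel two_ne_zero, one_pow, one_mul,
          mul_comm, pow_mul, div_pow, div_pow, one_pow, one_pow]
    _ ≤ 1 / p ^ 2 := by
        gcongr
        exact_mod_cast hpl

theorem corankMajorant_le {l n₀ I : ℕ} (hpl : p ≤ 2 ^ l) (hI : 2 * n₀ + 2 * l ≤ I)
    (hn₀ : 11 * l + I / 40 + 8 ≤ n₀ / 2) (j : ℕ) :
    corankMajorant n₀ (1 / p) (2 ^ (9 * l) * (1 / 2) ^ (n₀ / 2)) I j ≤ (4 / p) ^ j + 2 / p ^ 2 := by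
  have hdecay : (4 : ℝ) ^ n₀ * (1 / 2) ^ I * (1 / 4) ^ j ≤ 1 / p ^ 2 := by
    refine (mul_le_of_le_one_right (by positivity) ?_).trans
      (two_pow_mul_half_pow_le (a := 2 * n₀) hpl hI |>.trans_eq' ?_)
    · exact pow_le_one₀ (by norm_num) (by norm_num)
    · rw [pow_mul]
      norm_num
  have hgrowth : (65 / 64 : ℝ) ^ I ≤ 2 ^ (I / 40 + 1) := by
    calc (65 / 64 : ℝ) ^ I ≤ (65 / 64) ^ (40 * (I / 40 + 1)) :=
          pow_le_pow_right₀ (by norm_num) (by omega)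
      _ = ((65 / 64) ^ 40) ^ (I / 40 + 1) := by rw [pow_mul]
      _ ≤ 2 ^ (I / 40 + 1) := by
          gcongr
          norm_num
  have habsorb : 128 * (2 ^ (9 * l) * (1 / 2) ^ (n₀ / 2)) * (65 / 64 : ℝ) ^ I ≤ 1 / p ^ 2 := by
    calc _ ≤ 128 * (2 ^ (9 * l) * (1 / 2) ^ (n₀ / 2)) * (2 : ℝ) ^ (I / 40 + 1) := by gcongr
      _ = 2 ^ (7 + 9 * l + (I / 40 + 1)) * (1 / 2) ^ (n₀ / 2) := by ring
      _ ≤ 1 / p ^ 2 := two_pow_mul_half_pow_le hpl (by omega)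
  calc _ ≤ (4 * (1 / p)) ^ j + 1 / (p : ℝ) ^ 2 + 1 / p ^ 2 := by
        unfold corankMajorant
        gcongr
    _ = (4 / p) ^ j + 2 / p ^ 2 := by ring

theorem pow_four_le_two_pow_card {κ : Type*} {Z : Finset κ} {m l : ℕ} (hm : m ≤ 2 ^ l)
    (hZ : #Z = 4 * l) : m ^ 4 ≤ 2 ^ #Z := by
  rw [hZ, pow_mul']
  gcongr

/-- The recursion is started at size `n / 5`: dominating the trivial bound there costs a factor
`4 ^ (n / 5)`, which the remaining steps make up for. -/
theorem corankTail_le (hp : 256 ≤ p) {l : ℕ} (hl : 1 ≤ l) (hpl : p ≤ 2 ^ l) (hnl : n ≤ 2 ^ l)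
    (hn : 5 * (2 ^ 40 * l ^ 4) ≤ n) (lam : ZMod p) (j : ℕ) :
    corankTail lam n j ≤ (4 / p) ^ j + 2 / p ^ 2 := by
  have hl4 : l ≤ l ^ 4 := Nat.le_self_pow four_ne_zero l
  have h2 : (2 : ZMod p) ≠ 0 := Ring.two_ne_zero (by rw [ZMod.ringChar_zmod_n]; omega)
  obtain ⟨n₀, hn₀⟩ : ∃ n₀, n₀ = n / 5 := ⟨_, rfl⟩
  obtain ⟨I, rfl⟩ : ∃ I, n = n₀ + I := ⟨n - n₀, by omega⟩
  have hx : 1 / (p : ℝ) ≤ 1 / 256 := by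
    gcongr
    exact_mod_cast hp
  refine (le_corankMajorant (q := fun i j ↦ corankTail lam (n₀ + i) j) (n₀ := n₀)
    (by positivity) hx (β := 2 ^ (9 * l) * (1 / 2) ^ (n₀ / 2)) (by positivity)
    (fun i j ↦ corankTail_le_one lam _ j) (fun j hj ↦ (corankTail_eq_zero lam hj).le)
    (fun i hi j ↦ ?_) I le_rfl j).trans (corankMajorant_le hpl (by omega) (by omega) j)
  obtain ⟨Z, hZ⟩ := exists_finset_card_eq (m := 4 * l) (n := n₀ + i) (by omega)
  refine (corankTail_succ_le h2 (pow_four_le_two_pow_card hpl hZ) lam j).trans ?_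
  rw [mul_one_div]
  gcongr ?_ + _ + _
  refine (prob_not_isGood_le h2 hl hpl (by omega) (by omega) hZ lam).trans ?_
  gcongr 2 ^ (9 * l) * ?_
  exact pow_le_pow_of_le_one (by norm_num) (by norm_num) (by omega)

theorem abs_corankTail_one_sub_le (hp : 256 ≤ p) {l : ℕ} (hl : 1 ≤ l) (hpl : p ≤ 2 ^ l)
    (hnl : n ≤ 2 ^ l) (hn : 5 * (2 ^ 40 * l ^ 4) < n) (lam : ZMod p) :
    |corankTail lam n 1 - 1 / p| ≤ 31 / p ^ 2 := by
  have hl4 : l ≤ l ^ 4 := Nat.le_self_pow four_ne_zero l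
  have h2 : (2 : ZMod p) ≠ 0 := Ring.two_ne_zero (by rw [ZMod.ringChar_zmod_n]; omega)
  obtain ⟨m, rfl⟩ : ∃ m, n = m + 1 := ⟨n - 1, by omega⟩
  obtain ⟨Z, hZ⟩ := exists_finset_card_eq (m := 4 * l) (n := m) (by omega)
  have hgood : prob (fun ω ↦ ¬ IsGood Z (shiftedSymMat lam ω)) ≤ 1 / p ^ 2 :=
    (prob_not_isGood_le h2 hl hpl (by omega) (by omega) hZ lam).trans
      (two_pow_mul_half_pow_le hpl (by omega))
  have hone := corankTail_le hp hl hpl (by omega : m ≤ 2 ^ l) (by omega) lam 1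
  have htwo := corankTail_le hp hl hpl (by omega : m ≤ 2 ^ l) (by omega) lam 2
  have hp256 : (256 : ℝ) ≤ p := by exact_mod_cast hp
  have hinv : (2 : ℝ) / p ^ 2 ≤ 1 / p := by
    rw [div_le_div_iff₀ (by positivity) (by positivity)]
    nlinarith
  calc |corankTail lam (m + 1) 1 - 1 / p|
      ≤ 1 / p ^ 2 + 2 / p * ((4 / p) ^ 1 + 1 / p) + ((4 / p) ^ 2 + 2 / p ^ 2) + 2 / p ^ 2 := by
        refine (abs_corankTail_succ_one_sub_le h2 (pow_four_le_two_pow_card hpl hZ) lam).trans ?_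
        gcongr
        exact hone.trans (by gcongr)
    _ = 31 / p ^ 2 := by ring

end CorankRecursion

section Roots

theorem two_pow_mul_pow_four_le_two_pow {l : ℕ} (h : 128 ≤ l) : 2 ^ 48 * l ^ 4 ≤ 2 ^ l := by
  induction l, h using Nat.le_induction with
  | base => norm_num
  | succ l h ih =>
    have hstep : (l + 1) ^ 4 ≤ 2 * l ^ 4 := by nlinarith [Nat.zero_le (l ^ 3), sq_nonneg l]
    calc 2 ^ 48 * (l + 1) ^ 4 ≤ 2 ^ 48 * (2 * l ^ 4) := by gcongr
      _ = 2 * (2 ^ 48 * l ^ 4) := by ring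
      _ ≤ 2 * 2 ^ l := by gcongr
      _ = 2 ^ (l + 1) := by ring

/-- The scale `l` is `n ^ (1 / 4) / 2 ^ 11` rounded down. -/
theorem le_exp_or_exists_scale {n p : ℕ}
    (hp : (p : ℝ) ≤ Real.exp (1 / 2 ^ 13 * (n : ℝ) ^ ((1 : ℝ) / 4))) :
    (p : ℝ) ≤ Real.exp 32 ∨ ∃ l, 1 ≤ l ∧ p ≤ 2 ^ l ∧ n ≤ 2 ^ l ∧ 5 * (2 ^ 40 * l ^ 4) < n := by
  set s : ℝ := (n : ℝ) ^ ((1 : ℝ) / 4) with hs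
  have hs4 : s ^ 4 = n := by
    rw [hs, ← Real.rpow_natCast, ← Real.rpow_mul (by positivity)]
    norm_num
  set l := ⌊s / 2 ^ 11⌋₊
  have hle : (l : ℝ) * 2 ^ 11 ≤ s :=
    (le_div_iff₀ (by positivity)).1 (Nat.floor_le (by positivity))
  have hlt : s < (l + 1) * 2 ^ 11 := (div_lt_iff₀ (by positivity)).1 (Nat.lt_floor_add_one _)
  rcases lt_or_ge l 128 with hl | hl
  · left
    have hlR : (l : ℝ) + 1 ≤ 128 := by exact_mod_cast hl
    exact hp.trans (Real.exp_le_exp.2 (by linarith))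
  right
  have hlR : (128 : ℝ) ≤ l := by exact_mod_cast hl
  refine ⟨l, by omega, ?_, ?_, ?_⟩
  · have hlog : 1 / 2 ^ 13 * s ≤ l * Real.log 2 := by
      have := Real.log_two_gt_d9
      nlinarith
    have hpl : (p : ℝ) ≤ 2 ^ l := by
      calc (p : ℝ) ≤ Real.exp (l * Real.log 2) := hp.trans (Real.exp_le_exp.2 hlog)
        _ = 2 ^ l := by rw [Real.exp_nat_mul, Real.exp_log two_pos]
    exact_mod_cast hpl
  · have hn : (n : ℝ) ≤ 2 ^ 48 * l ^ 4 := by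
      calc (n : ℝ) = s ^ 4 := hs4.symm
        _ ≤ (2 ^ 12 * l) ^ 4 := by gcongr; linarith
        _ = 2 ^ 48 * l ^ 4 := by ring
    exact (by exact_mod_cast hn : n ≤ 2 ^ 48 * l ^ 4).trans (two_pow_mul_pow_four_le_two_pow hl)
  · have hn : (2 ^ 44 * l ^ 4 : ℝ) ≤ n := by
      calc (2 ^ 44 * l ^ 4 : ℝ) = (l * 2 ^ 11) ^ 4 := by ring
        _ ≤ s ^ 4 := by gcongr
        _ = n := hs4
    have hn' : 2 ^ 44 * l ^ 4 ≤ n := by exact_mod_cast hn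
    have hpos : 0 < l ^ 4 := by positivity
    omega

variable {p : ℕ} [Fact p.Prime]

open Classical in
theorem average_card_roots_eq (n : ℕ) :
    (∑ ω : Fin n → Fin n → Bool, (#{a ∈ range p | (symMat (ZMod p) ω
        - ((a : ℕ) : ZMod p) • (1 : Matrix (Fin n) (Fin n) (ZMod p))).det = 0} : ℝ))
      / Fintype.card (Fin n → Fin n → Bool) = ∑ a ∈ range p, corankTail (a : ZMod p) n 1 := by
  simp only [corankTail, corank_pos_iff, prob_eq_expect, ← expect_sum_comm]
  simp only [Fintype.expect_eq_sum_div_card, card_filter, Nat.cast_sum, Nat.cast_ite, Nat.cast_one,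
    Nat.cast_zero, shiftedSymMat]
  congr!

theorem abs_sum_corankTail_sub_one_le_card (n : ℕ) :
    |∑ a ∈ range p, corankTail (a : ZMod p) n 1 - 1| ≤ p := by
  have hnonneg : 0 ≤ ∑ a ∈ range p, corankTail (a : ZMod p) n 1 :=
    sum_nonneg fun a _ ↦ corankTail_nonneg _ _ _
  have hle : ∑ a ∈ range p, corankTail (a : ZMod p) n 1 ≤ p := by
    simpa using sum_le_sum fun (a : ℕ) (_ : a ∈ range p) ↦ corankTail_le_one (a : ZMod p) n 1
  have hp : (1 : ℝ) ≤ p := by exact_mod_cast (Fact.out : p.Prime).one_le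
  exact abs_le.2 ⟨by linarith, by linarith⟩

theorem abs_sum_corankTail_sub_one_le (hp : 256 ≤ p) {l n : ℕ} (hl : 1 ≤ l) (hpl : p ≤ 2 ^ l)
    (hnl : n ≤ 2 ^ l) (hn : 5 * (2 ^ 40 * l ^ 4) < n) :
    |∑ a ∈ range p, corankTail (a : ZMod p) n 1 - 1| ≤ 31 / p := by
  have hp0 : (p : ℝ) ≠ 0 := Nat.cast_ne_zero.2 (Fact.out : p.Prime).ne_zero
  calc |∑ a ∈ range p, corankTail (a : ZMod p) n 1 - 1|
      = |∑ a ∈ range p, (corankTail (a : ZMod p) n 1 - 1 / p)| := by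
        rw [sum_sub_distrib, sum_const, card_range, nsmul_eq_mul, mul_one_div_cancel hp0]
    _ ≤ ∑ a ∈ range p, |corankTail (a : ZMod p) n 1 - 1 / p| := abs_sum_le_sum_abs _ _
    _ ≤ ∑ _a ∈ range p, 31 / (p : ℝ) ^ 2 :=
        sum_le_sum fun a _ ↦ abs_corankTail_one_sub_le hp hl hpl hnl hn (a : ZMod p)
    _ = 31 / p := by
        rw [sum_const, card_range, nsmul_eq_mul]
        field_simp

end Roots

open Classical in
/-- The expected number of roots in `F_p` (without multiplicity) of the
characteristic polynomial of `M_n` mod `p` is `1 + O(1/p)`, for primes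
`2 < p ≤ exp(η n^{1/4})`. The elements of `F_p` are enumerated by `Finset.range p`. -/
theorem expected_number_of_roots_mod_p :
    ∃ η C : ℝ, 0 < η ∧ 0 < C ∧
      ∀ n p : ℕ, p.Prime → 2 < p →
        (p : ℝ) ≤ Real.exp (η * (n : ℝ) ^ ((1 : ℝ) / 4)) →
        |(∑ ω : Fin n → Fin n → Bool,
            (((Finset.range p).filter (fun a : ℕ =>
              (symMat (ZMod p) ω
                - (a : ZMod p) • (1 : Matrix (Fin n) (Fin n) (ZMod p))).det = 0)).card : ℝ))
            / (Fintype.card (Fin n → Fin n → Bool) : ℝ) - 1|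
          ≤ C / (p : ℝ) := by
  refine ⟨1 / 2 ^ 13, Real.exp 64, by positivity, by positivity, fun n p hprime _ hp ↦ ?_⟩
  have : Fact p.Prime := ⟨hprime⟩
  have hp0 : (0 : ℝ) < p := Nat.cast_pos.2 hprime.pos
  rw [average_card_roots_eq]
  by_cases hsmall : (p : ℝ) ≤ Real.exp 32
  · refine (abs_sum_corankTail_sub_one_le_card n).trans ((le_div_iff₀ hp0).2 ?_)
    calc (p : ℝ) * p ≤ Real.exp 32 * Real.exp 32 := by gcongr
      _ = Real.exp 64 := by rw [← Real.exp_add]; norm_num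
  obtain ⟨l, hl, hpl, hnl, hn⟩ := (le_exp_or_exists_scale hp).resolve_left hsmall
  have hp256 : 256 ≤ p := by
    have hexp : ((2 ^ 32 : ℕ) : ℝ) ≤ Real.exp 32 := by exact_mod_cast two_pow_le_exp 32
    have : 2 ^ 32 ≤ p := by exact_mod_cast hexp.trans (not_le.1 hsmall).le
    omega
  refine (abs_sum_corankTail_sub_one_le hp256 hl hpl hnl hn).trans ?_
  gcongr
  linarith [Real.add_one_le_exp 64]
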